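/- arXiv:2604.27778 — 2 statements merged into one kernel-verified Lean document; each statement's English description precedes it below -/
import Mathlib

section
/- Let 0 < α < 1 and let m be a positive integer. Let A : ∂𝔻 → GL(m, ℂ) be Hölder continuous of exponent α. Then there exist a continuous map Θ from the closed unit disc 𝔻̄ to the m×m complex matrices that is holomorphic on the open disc 𝔻, takes invertible values at every point of 𝔻̄, and is Hölder of exponent α on ∂𝔻, together with a nonincreasing sequence of integers κ₁ ≥ κ₂ ≥ … ≥ κ_m, such that for every ζ ∈ ∂𝔻 one has A(ζ)·conj(A(ζ))⁻¹ = Θ(ζ)·diag(ζ^{κ₁}, …, ζ^{κ_m})·conj(Θ(ζ))⁻¹. -/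
/-!
Write `B = A · conj(A)⁻¹`. A holomorphic vector function `f` is a good column of exponent `k`
(`GoodCol`) if `B · conj f = ζ ^ k · f` on the circle; the theorem asks for `m` good columns that are
linearly independent at every point of the closed disc.

*Many good columns.* On the Hölder class, a real function on the circle is the imaginary part of a
holomorphic function with control of the Hölder constant (Privalov's theorem, `exists_schwarz`,
proved by the Schwarz integral and the Hardy–Littlewood lemma). Hence, if `E` is uniformly small
with bounded Hölder constant, a Neumann series produces a holomorphic invertible `Ψ` near the
identity with `(1 + E) Ψ` real on the circle (`exists_near_identity`). The map `A` is approximated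
by a matrix `ζ⁻ⁿ P` of trigonometric polynomials without increase of Hölder constants
(`exists_trig_approx`), so `A⁻¹ ζ⁻ⁿ P = 1 + E` with `E` small. If `S = (1 + E) Ψ`, then `S` is real
and `P Ψ = ζⁿ A S`, so the columns of `Θ = P Ψ` are good of exponent `-2n`. Moreover `det Θ` is a
polynomial times a nonvanishing function and has no zeros on the circle (`exists_initial`).

*Removing the zeros of the determinant.* Let `det Θ(a) = 0` with `|a| < 1`, let `c` be a null vector
of `Θ(a)`, and normalize `c` to be `1` at an index `j₀` of least exponent in its support. A
holomorphic multiplier `p` with `conj p · ζ ^ κ = ζ ^ k · p` on the circle turns a good column of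
exponent `κ` into one of exponent `k`; for `k < κ` its value at `a` is arbitrary, for `k = κ` it may
be any real number (`exists_multiplier`). If the entries of `c` at the indices of exponent `κ j₀` are
real, the combination of columns with multipliers interpolating `c` vanishes at `a`, may be divided
by `(z - a) (1 - conj a z)`, and replaces column `j₀` (`step_real`). If the entry at some `j₁` with
`κ j₁ = κ j₀` is not real, then the multipliers are taken to exponent `κ j₀ - 1`, interpolating `c` and
`i c`; the two resulting columns are divided and replace the columns `j₀` and `j₁`
(`step_complex`). In both cases `det Θ` loses exactly one zero at `a`. After finitely many steps
`det Θ` has no zeros (`PartialFact.reduce`), and the columns are sorted by exponent.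
-/

section

open Complex Metric Set Filter Topology MeasureTheory

/-! ### Integral estimate for the kernel -/

lemma norm_circleMap_sub_ge {z : ℂ} (t : ℝ) : 1 - ‖z‖ ≤ ‖circleMap 0 1 t - z‖ := by
  have := norm_sub_norm_le (circleMap 0 1 t) z
  simpa using this

lemma circleMap_sub_ne_zero {z : ℂ} (hz : ‖z‖ < 1) (t : ℝ) : circleMap 0 1 t - z ≠ 0 := by
  rw [← norm_pos_iff]
  exact lt_of_lt_of_le (by linarith) (norm_circleMap_sub_ge t)

/-- Both `1 - r` and `|t| / π` are lower bounds for the distance from `e^{it}` to `r`. -/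
lemma norm_exp_sub_ge {r : ℝ} (hr0 : 0 ≤ r) (hr : r < 1) {t : ℝ} (ht : |t| ≤ Real.pi) :
    (1 - r + |t|) / (1 + Real.pi) ≤ ‖circleMap 0 1 t - r‖ := by
  have h1 : 1 - r ≤ ‖circleMap 0 1 t - r‖ := by
    have := norm_circleMap_sub_ge (z := (r : ℂ)) t
    simpa [abs_of_nonneg hr0] using this
  have h2 : ‖circleMap 0 1 t - 1‖ ≤ 2 * ‖circleMap 0 1 t - r‖ := by
    have h3 : ‖(r : ℂ) - 1‖ = 1 - r := by
      rw [norm_sub_rev, ← ofReal_one, ← ofReal_sub, norm_real, Real.norm_of_nonneg (by linarith)]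
    have := norm_add_le (circleMap 0 1 t - r) ((r : ℂ) - 1)
    rw [sub_add_sub_cancel, h3] at this
    linarith
  have h4 : 2 / Real.pi * |t| ≤ ‖circleMap 0 1 t - 1‖ := by
    have := Complex.norm_exp_I_mul_ofReal_sub_one t
    have h5 : circleMap 0 1 t = exp (I * t) := by simp [circleMap, mul_comm]
    rw [h5, this, norm_mul, Real.norm_eq_abs, Real.norm_eq_abs]
    have := Real.mul_abs_le_abs_sin (x := t / 2) (by rw [abs_div]; simpa using by linarith)
    rw [abs_div] at this
    simp at this ⊢
    calc 2 / Real.pi * |t| = 2 * (|t| / Real.pi) := by ring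
      _ ≤ _ := by linarith
  have hpi := Real.pi_pos
  rw [div_le_iff₀ (by positivity)]
  have : |t| ≤ Real.pi * ‖circleMap 0 1 t - r‖ := by
    have h6 : 2 / Real.pi * |t| ≤ 2 * ‖circleMap 0 1 t - r‖ := h4.trans h2
    have h7 : |t| = Real.pi / 2 * (2 / Real.pi * |t|) := by field_simp
    rw [h7]
    nlinarith
  nlinarith

lemma continuous_kernel_rpow {z : ℂ} (hz : ‖z‖ < 1) (p : ℝ) :
    Continuous fun t : ℝ => ‖circleMap 0 1 t - z‖ ^ p := by
  refine Continuous.rpow_const (by fun_prop) fun t => Or.inl ?_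
  exact norm_ne_zero_iff.2 (circleMap_sub_ne_zero hz t)

/-- Reduces by rotation to `z = r ≥ 0`, where `norm_exp_sub_ge` bounds the integrand by an explicit
power of `1 - r + t`. -/
lemma integral_kernel_le {α : ℝ} (hα0 : 0 < α) (hα1 : α < 1) {z : ℂ} (hz : ‖z‖ < 1) :
    ∫ t in (0 : ℝ)..2 * Real.pi, ‖circleMap 0 1 t - z‖ ^ (α - 2) ≤
      (1 + Real.pi) ^ (2 - α) * (2 / (1 - α)) * (1 - ‖z‖) ^ (α - 1) := by
  have hpi := Real.pi_pos
  set r := ‖z‖ with hr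
  have hr0 : 0 ≤ r := norm_nonneg z
  have hrr : ‖(r : ℂ)‖ < 1 := by simpa [abs_of_nonneg hr0] using hz
  -- rotate `z` to the positive real axis
  have h1 : ∀ t : ℝ, ‖circleMap 0 1 t - z‖ = ‖circleMap 0 1 (t - z.arg) - r‖ := by
    intro t
    have : circleMap 0 1 t - z = exp (z.arg * I) * (circleMap 0 1 (t - z.arg) - r) := by
      conv_lhs => rw [← norm_mul_exp_arg_mul_I z]
      simp only [circleMap, zero_add, ofReal_one, one_mul, mul_sub, ← Complex.exp_add, hr]
      push_cast
      ring_nf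
    rw [this, norm_mul, norm_exp_ofReal_mul_I, one_mul]
  have hper : Function.Periodic (fun t : ℝ => ‖circleMap 0 1 t - r‖ ^ (α - 2)) (2 * Real.pi) := by
    intro t
    simp only [periodic_circleMap 0 1 t]
  have h2 : ∫ t in (0 : ℝ)..2 * Real.pi, ‖circleMap 0 1 t - z‖ ^ (α - 2) =
      ∫ t in (-Real.pi)..Real.pi, ‖circleMap 0 1 t - r‖ ^ (α - 2) := by
    simp_rw [h1]
    rw [intervalIntegral.integral_comp_sub_right
      (fun t => ‖circleMap 0 1 t - r‖ ^ (α - 2)) z.arg]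
    have := hper.intervalIntegral_add_eq (0 - z.arg) (-Real.pi)
    rw [show 2 * Real.pi - z.arg = 0 - z.arg + 2 * Real.pi by ring, this]
    congr 1; ring
  have hc := continuous_kernel_rpow hrr (α - 2)
  have h3 : ∫ t in (-Real.pi)..Real.pi, ‖circleMap 0 1 t - r‖ ^ (α - 2) =
      2 * ∫ t in (0 : ℝ)..Real.pi, ‖circleMap 0 1 t - r‖ ^ (α - 2) := by
    have hsym : ∀ t : ℝ, ‖circleMap 0 1 (-t) - r‖ = ‖circleMap 0 1 t - r‖ := by
      intro t
      rw [← norm_conj (circleMap 0 1 t - r)]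
      congr 1
      simp [circleMap, ← exp_conj]
    have : ∫ t in (-Real.pi)..0, ‖circleMap 0 1 t - r‖ ^ (α - 2) =
        ∫ t in (0 : ℝ)..Real.pi, ‖circleMap 0 1 t - r‖ ^ (α - 2) := by
      have := intervalIntegral.integral_comp_neg (a := 0) (b := Real.pi)
        (fun t => ‖circleMap 0 1 t - r‖ ^ (α - 2))
      simp only [hsym, neg_zero] at this
      exact this.symm
    rw [← intervalIntegral.integral_add_adjacent_intervals (hc.intervalIntegrable _ _)
      (hc.intervalIntegrable 0 _), this]
    ring
  have hpos : ∀ t ∈ Icc (0 : ℝ) Real.pi, 0 < 1 - r + t := fun t ht => by linarith [ht.1]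
  have hg : ContinuousOn (fun t : ℝ => (1 + Real.pi) ^ (2 - α) * (1 - r + t) ^ (α - 2))
      (uIcc 0 Real.pi) := by
    rw [uIcc_of_le hpi.le]
    exact continuousOn_const.mul
      (ContinuousOn.rpow_const (by fun_prop) fun t ht => Or.inl (hpos t ht).ne')
  have h4 : ∫ t in (0 : ℝ)..Real.pi, ‖circleMap 0 1 t - r‖ ^ (α - 2) ≤
      ∫ t in (0 : ℝ)..Real.pi, (1 + Real.pi) ^ (2 - α) * (1 - r + t) ^ (α - 2) := by
    refine intervalIntegral.integral_mono_on hpi.le (hc.intervalIntegrable _ _)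
      hg.intervalIntegrable fun t ht => ?_
    have h5 := norm_exp_sub_ge hr0 hz (t := t) (by rw [abs_of_nonneg ht.1]; exact ht.2)
    rw [abs_of_nonneg ht.1] at h5
    have h6 : 0 < (1 - r + t) / (1 + Real.pi) := div_pos (hpos t ht) (by positivity)
    refine (Real.rpow_le_rpow_of_nonpos h6 h5 (by linarith)).trans (le_of_eq ?_)
    rw [Real.div_rpow (hpos t ht).le (by positivity), div_eq_mul_inv,
      ← Real.rpow_neg (by positivity), neg_sub, mul_comm]
  have h5 : ∫ t in (0 : ℝ)..Real.pi, (1 - r + t) ^ (α - 2) =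
      ((1 - r) ^ (α - 1) - (1 - r + Real.pi) ^ (α - 1)) / (1 - α) := by
    have hd : ∀ t ∈ uIcc 0 Real.pi, HasDerivAt (fun t : ℝ => (1 - r + t) ^ (α - 1) / (α - 1))
        ((1 - r + t) ^ (α - 2)) t := by
      intro t ht
      rw [uIcc_of_le hpi.le] at ht
      have := (((hasDerivAt_id t).const_add (1 - r)).rpow_const (p := α - 1)
        (Or.inl (hpos t ht).ne')).div_const (α - 1)
      refine this.congr_deriv ?_
      have h1 : α - 1 ≠ 0 := by linarith
      rw [id, one_mul, mul_div_right_comm, div_self h1, one_mul]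
      ring_nf
    rw [intervalIntegral.integral_eq_sub_of_hasDerivAt hd]
    · have : α - 1 ≠ 0 := by linarith
      have : 1 - α ≠ 0 := by linarith
      simp
      field_simp
      ring
    · apply ContinuousOn.intervalIntegrable
      rw [uIcc_of_le hpi.le]
      exact ContinuousOn.rpow_const (by fun_prop) fun t ht => Or.inl (hpos t ht).ne'
  rw [intervalIntegral.integral_const_mul, h5] at h4
  have h6 : 0 ≤ (1 - r + Real.pi) ^ (α - 1) := Real.rpow_nonneg (by linarith) _
  have h7 : (0 : ℝ) < (1 + Real.pi) ^ (2 - α) := Real.rpow_pos_of_pos (by positivity) _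
  have h8 : 0 < 1 - α := by linarith
  rw [h2, h3]
  calc _ ≤ 2 * ((1 + Real.pi) ^ (2 - α) * (((1 - r) ^ (α - 1)) / (1 - α))) := by
        refine mul_le_mul_of_nonneg_left (h4.trans ?_) (by norm_num)
        gcongr
        linarith
    _ = _ := by ring

/-! ### Hölder extension and the Hardy–Littlewood lemma -/

/-- A function that is Hölder on the open disc extends to the closed disc with the same constant. -/
lemma exists_holder_extension {α D : ℝ} (hα0 : 0 < α) {h : ℂ → ℂ}
    (hh : ∀ z ∈ ball (0 : ℂ) 1, ∀ w ∈ ball (0 : ℂ) 1, ‖h z - h w‖ ≤ D * ‖z - w‖ ^ α) :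
    ∃ g : ℂ → ℂ, ContinuousOn g (closedBall 0 1) ∧ EqOn g h (ball 0 1) ∧
      ∀ z ∈ closedBall (0 : ℂ) 1, ∀ w ∈ closedBall (0 : ℂ) 1,
        ‖g z - g w‖ ≤ D * ‖z - w‖ ^ α := by
  have hcl : closure (ball (0 : ℂ) 1) = closedBall 0 1 := closure_ball _ one_ne_zero
  have hev : ∀ x y : ℂ, ∀ᶠ p : ℂ × ℂ in 𝓝[ball 0 1] x ×ˢ 𝓝[ball 0 1] y,
      p.1 ∈ ball (0 : ℂ) 1 ∧ p.2 ∈ ball (0 : ℂ) 1 := fun x y =>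
    prod_mem_prod self_mem_nhdsWithin self_mem_nhdsWithin
  have hlim : ∀ x y : ℂ, Tendsto (fun p : ℂ × ℂ => D * ‖p.1 - p.2‖ ^ α)
      (𝓝[ball 0 1] x ×ˢ 𝓝[ball 0 1] y) (𝓝 (D * ‖x - y‖ ^ α)) := by
    intro x y
    have hc : Continuous fun p : ℂ × ℂ => D * ‖p.1 - p.2‖ ^ α :=
      continuous_const.mul (Continuous.rpow_const (by fun_prop) fun _ => Or.inr hα0.le)
    refine (hc.tendsto (x, y)).mono_left ?_
    rw [nhds_prod_eq]
    exact prod_mono nhdsWithin_le_nhds nhdsWithin_le_nhds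
  have hex : ∀ x ∈ closedBall (0 : ℂ) 1, ∃ y, Tendsto h (𝓝[ball 0 1] x) (𝓝 y) := by
    intro x hx
    have : (𝓝[ball 0 1] x).NeBot := mem_closure_iff_nhdsWithin_neBot.1 (hcl ▸ hx)
    rw [← cauchy_map_iff_exists_tendsto, cauchy_map_iff', Metric.uniformity_eq_comap_nhds_zero,
      tendsto_comap_iff]
    refine squeeze_zero' (Eventually.of_forall fun p => dist_nonneg) ?_
      (by simpa [Real.zero_rpow hα0.ne'] using hlim x x)
    filter_upwards [hev x x] with p hp
    simpa [dist_eq_norm] using hh _ hp.1 _ hp.2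
  refine ⟨extendFrom (ball 0 1) h, continuousOn_extendFrom hcl.ge hex, ?_, ?_⟩
  · intro x hx
    refine extendFrom_eq (subset_closure hx) ?_
    obtain ⟨y, hy⟩ := hex x (ball_subset_closedBall hx)
    have : h x = y := by
      refine tendsto_nhds_unique (f := h) (l := pure x) (tendsto_pure_nhds _ _) ?_
      exact hy.mono_left (pure_le_nhdsWithin hx)
    rwa [this]
  · intro z hz w hw
    have hz' := tendsto_extendFrom (hex z hz)
    have hw' := tendsto_extendFrom (hex w hw)
    have : (𝓝[ball 0 1] z).NeBot := mem_closure_iff_nhdsWithin_neBot.1 (hcl ▸ hz)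
    have : (𝓝[ball 0 1] w).NeBot := mem_closure_iff_nhdsWithin_neBot.1 (hcl ▸ hw)
    refine le_of_tendsto_of_tendsto
      (((hz'.comp tendsto_fst).sub (hw'.comp tendsto_snd)).norm) (hlim z w) ?_
    filter_upwards [hev z w] with p hp using hh _ hp.1 _ hp.2

/-- Radial half of the Hardy–Littlewood theorem: the bound on `h'` is integrated along the
segment from `(1 - δ) z` to `z`, on which `1 - ‖(1 - s) z‖ ≥ s`. -/
lemma hardyLittlewood_radial {α M : ℝ} (hα0 : 0 < α) (hα1 : α < 1) (hM : 0 ≤ M) {h h' : ℂ → ℂ}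
    (hd : ∀ z ∈ ball (0 : ℂ) 1, HasDerivAt h (h' z) z)
    (hb : ∀ z ∈ ball (0 : ℂ) 1, ‖h' z‖ ≤ M * (1 - ‖z‖) ^ (α - 1))
    {z : ℂ} (hz : z ∈ ball (0 : ℂ) 1) {δ : ℝ} (hδ0 : 0 ≤ δ) (hδ1 : δ ≤ 1) :
    ‖h z - h (((1 - δ : ℝ) : ℂ) * z)‖ ≤ M / α * δ ^ α := by
  rw [mem_ball_zero_iff] at hz
  have hmem : ∀ τ ∈ Icc (0 : ℝ) δ, ‖((1 - δ + τ : ℝ) : ℂ) * z‖ ≤ (1 - δ + τ) * ‖z‖ := by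
    intro τ hτ
    rw [norm_mul, norm_real, Real.norm_of_nonneg (by linarith [hτ.1])]
  have hmem' : ∀ τ ∈ Icc (0 : ℝ) δ, ((1 - δ + τ : ℝ) : ℂ) * z ∈ ball (0 : ℂ) 1 := by
    intro τ hτ
    rw [mem_ball_zero_iff]
    refine (hmem τ hτ).trans_lt ?_
    nlinarith [hτ.1, hτ.2, norm_nonneg z]
  have hder : ∀ τ ∈ Icc (0 : ℝ) δ, HasDerivAt
      (fun τ : ℝ => h (((1 - δ + τ : ℝ) : ℂ) * z) - h (((1 - δ : ℝ) : ℂ) * z))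
      (h' (((1 - δ + τ : ℝ) : ℂ) * z) * z) τ := by
    intro τ hτ
    have h1 : HasDerivAt (fun τ : ℝ => ((1 - δ + τ : ℝ) : ℂ) * z) z τ := by
      have := (((hasDerivAt_id τ).const_add (1 - δ)).ofReal_comp).mul_const z
      simpa using this
    exact ((hd _ (hmem' τ hτ)).comp τ h1).sub_const _
  have key := image_norm_le_of_norm_deriv_right_le_deriv_boundary' (a := 0) (b := δ)
    (f := fun τ : ℝ => h (((1 - δ + τ : ℝ) : ℂ) * z) - h (((1 - δ : ℝ) : ℂ) * z))
    (f' := fun τ => h' (((1 - δ + τ : ℝ) : ℂ) * z) * z)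
    (B := fun τ => M / α * (δ ^ α - (δ - τ) ^ α))
    (B' := fun τ => M * (δ - τ) ^ (α - 1))
    (fun τ hτ => (hder τ hτ).continuousAt.continuousWithinAt)
    (fun τ hτ => (hder τ ⟨hτ.1, hτ.2.le⟩).hasDerivWithinAt)
    (by simp)
    (continuousOn_const.mul (continuousOn_const.sub
      (ContinuousOn.rpow_const (by fun_prop) fun _ _ => Or.inr hα0.le)))
    (by
      intro τ hτ
      have h1 : HasDerivAt (fun τ : ℝ => δ - τ) (-1) τ := by
        simpa using (hasDerivAt_id τ).const_sub δ
      have h2 := ((h1.rpow_const (p := α) (Or.inl (by linarith [hτ.2]))).const_sub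
        (δ ^ α)).const_mul (M / α)
      refine (h2.congr_deriv ?_).hasDerivWithinAt
      field_simp)
    (by
      intro τ hτ
      have h1 := hmem τ ⟨hτ.1, hτ.2.le⟩
      have h2 := hb _ (hmem' τ ⟨hτ.1, hτ.2.le⟩)
      have h3 : δ - τ ≤ 1 - ‖((1 - δ + τ : ℝ) : ℂ) * z‖ := by
        nlinarith [hτ.1, hτ.2, norm_nonneg z]
      have h4 := Real.rpow_le_rpow_of_nonpos (by linarith [hτ.2]) h3
        (show α - 1 ≤ 0 by linarith)
      rw [norm_mul]
      calc _ ≤ ‖h' (((1 - δ + τ : ℝ) : ℂ) * z)‖ * 1 := by gcongr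
        _ ≤ _ := by rw [mul_one]; exact h2.trans (by gcongr))
    (x := δ) ⟨hδ0, le_rfl⟩
  simpa [Real.zero_rpow hα0.ne'] using key

/-- Hardy–Littlewood: a bound `(1 - ‖z‖) ^ (α - 1)` on the derivative gives Hölder continuity of
exponent `α`. Both points are moved inwards by `δ = min ‖z - w‖ 1`, where the mean value inequality
applies. -/
lemma hardyLittlewood {α M : ℝ} (hα0 : 0 < α) (hα1 : α < 1) (hM : 0 ≤ M) {h h' : ℂ → ℂ}
    (hd : ∀ z ∈ ball (0 : ℂ) 1, HasDerivAt h (h' z) z)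
    (hb : ∀ z ∈ ball (0 : ℂ) 1, ‖h' z‖ ≤ M * (1 - ‖z‖) ^ (α - 1)) :
    ∀ z ∈ ball (0 : ℂ) 1, ∀ w ∈ ball (0 : ℂ) 1,
      ‖h z - h w‖ ≤ (2 / α + 1) * M * ‖z - w‖ ^ α := by
  intro z hz w hw
  rcases eq_or_ne z w with rfl | hne
  · simp [Real.zero_rpow hα0.ne']
  have hpos : 0 < ‖z - w‖ := norm_pos_iff.2 (sub_ne_zero.2 hne)
  set δ := min ‖z - w‖ 1 with hδ
  have hδ0 : 0 < δ := lt_min hpos one_pos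
  have hδ1 : δ ≤ 1 := min_le_right _ _
  have h1 := hardyLittlewood_radial hα0 hα1 hM hd hb hz hδ0.le hδ1
  have h2 := hardyLittlewood_radial hα0 hα1 hM hd hb hw hδ0.le hδ1
  have h3 : ‖h (((1 - δ : ℝ) : ℂ) * z) - h (((1 - δ : ℝ) : ℂ) * w)‖ ≤ M * δ ^ α := by
    rcases eq_or_lt_of_le hδ1 with h1' | h1'
    · rw [h1']; simpa using hM
    have hsub : ∀ x ∈ closedBall (0 : ℂ) (1 - δ), x ∈ ball (0 : ℂ) 1 := fun x hx => by
      rw [mem_closedBall_zero_iff] at hx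
      rw [mem_ball_zero_iff]; linarith
    have hin : ∀ x ∈ ball (0 : ℂ) 1, ((1 - δ : ℝ) : ℂ) * x ∈ closedBall (0 : ℂ) (1 - δ) := by
      intro x hx
      rw [mem_ball_zero_iff] at hx
      rw [mem_closedBall_zero_iff, norm_mul, norm_real, Real.norm_of_nonneg (by linarith)]
      nlinarith
    have := Convex.norm_image_sub_le_of_norm_hasDerivWithin_le (C := M * δ ^ (α - 1))
      (fun x hx => (hd x (hsub x hx)).hasDerivWithinAt) (fun x hx => ?_)
      (convex_closedBall (0 : ℂ) (1 - δ)) (hin w hw) (hin z hz)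
    · refine this.trans ?_
      rw [← mul_sub, norm_mul, norm_real, Real.norm_of_nonneg (by linarith)]
      have hδ' : δ = ‖z - w‖ := by
        rcases min_choice ‖z - w‖ 1 with h | h
        · exact h
        · rw [hδ, h] at h1'; exact absurd h1' (lt_irrefl _)
      rw [← hδ', mul_assoc]
      gcongr
      calc δ ^ (α - 1) * ((1 - δ) * δ) ≤ δ ^ (α - 1) * δ := by
            gcongr; nlinarith
        _ = δ ^ α := by
            rw [← Real.rpow_add_one hδ0.ne']; ring_nf
    · refine (hb x (hsub x hx)).trans ?_
      rw [mem_closedBall_zero_iff] at hx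
      exact mul_le_mul_of_nonneg_left
        (Real.rpow_le_rpow_of_nonpos hδ0 (by linarith) (by linarith)) hM
  have h4 : δ ^ α ≤ ‖z - w‖ ^ α := Real.rpow_le_rpow hδ0.le (min_le_left _ _) hα0.le
  have h5 : ‖h z - h w‖ ≤ ‖h z - h (((1 - δ : ℝ) : ℂ) * z)‖ +
      ‖h (((1 - δ : ℝ) : ℂ) * z) - h (((1 - δ : ℝ) : ℂ) * w)‖ +
      ‖h w - h (((1 - δ : ℝ) : ℂ) * w)‖ := by
    rw [norm_sub_rev (h w)]
    refine le_trans (le_of_eq ?_) (norm_add₃_le)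
    congr 1; ring
  calc ‖h z - h w‖ ≤ (2 / α + 1) * M * δ ^ α := by
        refine h5.trans ?_
        have : (2 / α + 1) * M * δ ^ α = M / α * δ ^ α + M * δ ^ α + M / α * δ ^ α := by ring
        linarith
    _ ≤ _ := by gcongr

/-! ### The Schwarz integral and Privalov's theorem -/

/-- The Schwarz integral of `U` over the unit circle, parametrized by `t ↦ e^{it}`. -/
noncomputable def schwarzIntegral (U : ℝ → ℂ) (z : ℂ) : ℂ :=
  (2 * Real.pi : ℂ)⁻¹ * ∫ t in (0 : ℝ)..2 * Real.pi,
    U t * ((circleMap 0 1 t + z) / (circleMap 0 1 t - z))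

lemma continuous_schwarz_integrand {U : ℝ → ℂ} (hU : Continuous U) {z : ℂ} (hz : ‖z‖ < 1) :
    Continuous fun t : ℝ => U t * ((circleMap 0 1 t + z) / (circleMap 0 1 t - z)) :=
  hU.mul (Continuous.div (by fun_prop) (by fun_prop) fun t => circleMap_sub_ne_zero hz t)

lemma schwarzIntegral_const (c : ℂ) {z : ℂ} (hz : ‖z‖ < 1) :
    schwarzIntegral (fun _ => c) z = c := by
  have h := circleIntegral.integral_sub_inv_of_mem_ball (c := 0) (w := z) (R := 1)
    (by simpa using hz)
  rw [circleIntegral] at h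
  simp only [deriv_circleMap, smul_eq_mul] at h
  have h1 : ∀ t : ℝ, c * ((circleMap 0 1 t + z) / (circleMap 0 1 t - z)) =
      (2 * c / I) * (circleMap 0 1 t * I * (circleMap 0 1 t - z)⁻¹) - c := by
    intro t
    have := circleMap_sub_ne_zero hz t
    field_simp
    ring
  have hc : Continuous fun t : ℝ => (2 * c / I) *
      (circleMap 0 1 t * I * (circleMap 0 1 t - z)⁻¹) :=
    continuous_const.mul (Continuous.mul (by fun_prop)
      (Continuous.inv₀ (by fun_prop) fun t => circleMap_sub_ne_zero hz t))
  rw [schwarzIntegral]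
  simp_rw [h1]
  rw [intervalIntegral.integral_sub (hc.intervalIntegrable _ _) (by simp),
    intervalIntegral.integral_const_mul, h]
  have : (Real.pi : ℂ) ≠ 0 := by exact_mod_cast Real.pi_ne_zero
  simp
  field_simp
  ring_nf
  rw [I_sq]
  ring

lemma schwarzIntegral_sub {U V : ℝ → ℂ} (hU : Continuous U) (hV : Continuous V) {z : ℂ}
    (hz : ‖z‖ < 1) :
    schwarzIntegral (fun t => U t - V t) z = schwarzIntegral U z - schwarzIntegral V z := by
  simp only [schwarzIntegral, sub_mul]
  rw [intervalIntegral.integral_sub ((continuous_schwarz_integrand hU hz).intervalIntegrable _ _)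
    ((continuous_schwarz_integrand hV hz).intervalIntegrable _ _), mul_sub]

lemma hasDerivAt_schwarzIntegral {U : ℝ → ℂ} (hU : Continuous U) {z : ℂ} (hz : ‖z‖ < 1) :
    HasDerivAt (schwarzIntegral U) ((2 * Real.pi : ℂ)⁻¹ * ∫ t in (0 : ℝ)..2 * Real.pi,
      U t * (2 * circleMap 0 1 t / (circleMap 0 1 t - z) ^ 2)) z := by
  set ρ := (1 - ‖z‖) / 2 with hρ
  have hρ0 : 0 < ρ := by rw [hρ]; linarith
  have hball : ∀ x ∈ ball z ρ, ‖x‖ < 1 ∧ ρ ≤ 1 - ‖x‖ := by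
    intro x hx
    rw [mem_ball, dist_eq_norm] at hx
    have := norm_sub_norm_le x z
    constructor <;> linarith
  refine HasDerivAt.const_mul _ ?_
  refine (intervalIntegral.hasDerivAt_integral_of_dominated_loc_of_deriv_le
    (bound := fun t => ‖U t‖ * (2 / ρ ^ 2)) (s := ball z ρ)
    (F' := fun x t => U t * (2 * circleMap 0 1 t / (circleMap 0 1 t - x) ^ 2))
    (ball_mem_nhds z hρ0) ?_ ?_ ?_ ?_ ?_ ?_).2
  · filter_upwards [ball_mem_nhds z hρ0] with x hx
    exact (continuous_schwarz_integrand hU (hball x hx).1).aestronglyMeasurable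
  · exact (continuous_schwarz_integrand hU hz).intervalIntegrable _ _
  · refine Continuous.aestronglyMeasurable ?_
    exact hU.mul (Continuous.div (by fun_prop) (by fun_prop)
      fun t => pow_ne_zero 2 (circleMap_sub_ne_zero hz t))
  · refine Eventually.of_forall fun t _ x hx => ?_
    have h1 := (hball x hx).2.trans (norm_circleMap_sub_ge (z := x) t)
    rw [norm_mul, norm_div, norm_mul, norm_pow]
    simp only [norm_circleMap_zero, abs_one, mul_one, Complex.norm_ofNat]
    gcongr
  · exact (Continuous.intervalIntegrable (by fun_prop) _ _)
  · refine Eventually.of_forall fun t _ x hx => ?_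
    have hne := circleMap_sub_ne_zero (hball x hx).1 t
    refine HasDerivAt.const_mul _ ?_
    have := ((hasDerivAt_id x).const_add (circleMap 0 1 t)).div
      ((hasDerivAt_id x).const_sub (circleMap 0 1 t)) hne
    refine this.congr_deriv ?_
    simp only [id]
    congr 1
    ring

/-- A boundary point closest to `z`. -/
lemma exists_nearest_boundary {z : ℂ} (hz : ‖z‖ < 1) :
    ∃ ζ ∈ sphere (0 : ℂ) 1, ‖ζ - z‖ = 1 - ‖z‖ := by
  rcases eq_or_ne z 0 with rfl | h
  · exact ⟨1, by simp, by simp⟩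
  · have hn : ‖z‖ ≠ 0 := norm_ne_zero_iff.2 h
    refine ⟨(‖z‖ : ℂ)⁻¹ * z, by simp [hn], ?_⟩
    have : (‖z‖ : ℂ)⁻¹ * z - z = ((‖z‖⁻¹ - 1 : ℝ) : ℂ) * z := by push_cast; ring
    rw [this, norm_mul, norm_real, Real.norm_of_nonneg, sub_mul, inv_mul_cancel₀ hn, one_mul]
    rw [sub_nonneg]
    exact (one_le_inv₀ (norm_pos_iff.2 h)).2 hz.le

lemma norm_circleMap_sub_rpow_le {α : ℝ} (hα0 : 0 < α) (hα1 : α < 1) {z ζ : ℂ} (hz : ‖z‖ < 1)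
    (hζ : ‖ζ - z‖ = 1 - ‖z‖) (t : ℝ) :
    ‖circleMap 0 1 t - ζ‖ ^ α / ‖circleMap 0 1 t - z‖ ^ 2 ≤
      2 * ‖circleMap 0 1 t - z‖ ^ (α - 2) := by
  have h0 : 0 < ‖circleMap 0 1 t - z‖ := norm_pos_iff.2 (circleMap_sub_ne_zero hz t)
  have h1 : ‖circleMap 0 1 t - ζ‖ ≤ 2 * ‖circleMap 0 1 t - z‖ := by
    have := norm_add_le (circleMap 0 1 t - z) (z - ζ)
    rw [sub_add_sub_cancel, norm_sub_rev z, hζ] at this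
    linarith [norm_circleMap_sub_ge (z := z) t]
  have h2 : ‖circleMap 0 1 t - ζ‖ ^ α ≤ 2 * ‖circleMap 0 1 t - z‖ ^ α := by
    refine (Real.rpow_le_rpow (norm_nonneg _) h1 hα0.le).trans ?_
    rw [Real.mul_rpow (by norm_num) h0.le]
    gcongr
    calc (2 : ℝ) ^ α ≤ 2 ^ (1 : ℝ) := Real.rpow_le_rpow_of_exponent_le (by norm_num) hα1.le
      _ = 2 := by simp
  rw [div_le_iff₀ (by positivity), mul_assoc, ← Real.rpow_natCast _ 2, ← Real.rpow_add h0]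
  simpa using h2

/-- **Privalov's theorem** for the disc: a real Hölder function `u` on the circle is the imaginary
part of a holomorphic function whose Hölder constant is controlled by that of `u`; the last bound
interpolates between the sup norm and the Hölder seminorm of `u`. -/
lemma exists_schwarz {α : ℝ} (hα0 : 0 < α) (hα1 : α < 1) :
    ∃ C : ℝ, 0 < C ∧ ∀ (u : ℂ → ℝ) (M K : ℝ), 0 ≤ M → 0 ≤ K →
      (∀ ζ ∈ sphere (0 : ℂ) 1, |u ζ| ≤ M) →
      (∀ ζ₁ ∈ sphere (0 : ℂ) 1, ∀ ζ₂ ∈ sphere (0 : ℂ) 1, |u ζ₁ - u ζ₂| ≤ K * ‖ζ₁ - ζ₂‖ ^ α) →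
      ∃ h : ℂ → ℂ, ContinuousOn h (closedBall 0 1) ∧ DifferentiableOn ℂ h (ball 0 1) ∧
        (∀ ζ ∈ sphere (0 : ℂ) 1, (h ζ).im = u ζ) ∧
        (∀ ζ₁ ∈ sphere (0 : ℂ) 1, ∀ ζ₂ ∈ sphere (0 : ℂ) 1,
          ‖h ζ₁ - h ζ₂‖ ≤ C * K * ‖ζ₁ - ζ₂‖ ^ α) ∧
        ∀ η : ℝ, 0 < η → η ≤ 1 → ∀ z ∈ closedBall (0 : ℂ) 1,
          ‖h z‖ ≤ 2 / η * M + C * K * η ^ α := by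
  have hpi := Real.pi_pos
  set J : ℝ := (1 + Real.pi) ^ (2 - α) * (2 / (1 - α)) with hJ
  have hJ0 : 0 < J := mul_pos (Real.rpow_pos_of_pos (by positivity) _)
    (div_pos two_pos (by linarith))
  refine ⟨(2 / α + 1) * (4 * J), by positivity, ?_⟩
  intro u M K hM hK huM huK
  set U : ℝ → ℂ := fun t => (u (circleMap 0 1 t) : ℂ) with hUdef
  have hS : ∀ t, circleMap 0 1 t ∈ sphere (0 : ℂ) 1 := fun t => by simp
  have hUc : Continuous U := by
    have h1 : ContinuousOn u (sphere 0 1) := by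
      intro ζ hζ
      rw [ContinuousWithinAt, tendsto_iff_dist_tendsto_zero]
      refine squeeze_zero' (g := fun x => K * ‖x - ζ‖ ^ α)
        (Eventually.of_forall fun _ => dist_nonneg) ?_ ?_
      · filter_upwards [self_mem_nhdsWithin] with x hx
        simpa [Real.dist_eq] using huK x hx ζ hζ
      · have : Continuous fun x : ℂ => K * ‖x - ζ‖ ^ α :=
          continuous_const.mul (Continuous.rpow_const (by fun_prop) fun _ => Or.inr hα0.le)
        have h2 := this.tendsto ζ
        simp only [sub_self, norm_zero, Real.zero_rpow hα0.ne', mul_zero] at h2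
        exact h2.mono_left nhdsWithin_le_nhds
    exact continuous_ofReal.comp (h1.comp_continuous (continuous_circleMap 0 1) hS)
  have hUM : ∀ t, ‖U t‖ ≤ M := fun t => by simpa [hUdef] using huM _ (hS t)
  have hUK : ∀ t, ∀ ζ ∈ sphere (0 : ℂ) 1,
      ‖U t - u ζ‖ ≤ K * ‖circleMap 0 1 t - ζ‖ ^ α := fun t ζ hζ => by
    have := huK _ (hS t) ζ hζ
    simp only [hUdef]
    rwa [← ofReal_sub, norm_real]
  set F := schwarzIntegral U with hF
  set F' : ℂ → ℂ := fun z => (2 * Real.pi : ℂ)⁻¹ * ∫ t in (0 : ℝ)..2 * Real.pi,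
      U t * (2 * circleMap 0 1 t / (circleMap 0 1 t - z) ^ 2) with hF'
  have hd : ∀ z ∈ ball (0 : ℂ) 1, HasDerivAt F (F' z) z := fun z hz =>
    hasDerivAt_schwarzIntegral hUc (by simpa using hz)
  have hpin : ‖(2 * Real.pi : ℂ)⁻¹‖ = (2 * Real.pi)⁻¹ := by
    rw [norm_inv, norm_mul]; simp [abs_of_pos hpi]
  have hpi1 : (2 * Real.pi)⁻¹ ≤ 1 := inv_le_one_of_one_le₀ (by linarith [Real.pi_gt_three])
  have hker : ∀ (z : ℂ), ‖z‖ < 1 → ∀ (c : ℝ), 0 ≤ c →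
      ∫ t in (0 : ℝ)..2 * Real.pi, c * ‖circleMap 0 1 t - z‖ ^ (α - 2) ≤
      c * (J * (1 - ‖z‖) ^ (α - 1)) := by
    intro z hz c hc
    rw [intervalIntegral.integral_const_mul]
    exact mul_le_mul_of_nonneg_left (integral_kernel_le hα0 hα1 hz) hc
  have hb : ∀ z ∈ ball (0 : ℂ) 1, ‖F' z‖ ≤ 4 * J * K * (1 - ‖z‖) ^ (α - 1) := by
    intro z hz
    have hz1 : ‖z‖ < 1 := by simpa using hz
    obtain ⟨ζ, hζ, hζz⟩ := exists_nearest_boundary hz1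
    -- subtracting the constant `u ζ` from `U` does not change the derivative
    have h1 : HasDerivAt (schwarzIntegral fun t => U t - u ζ) (F' z) z := by
      refine ((hd z hz).sub_const (u ζ : ℂ)).congr_of_eventuallyEq ?_
      filter_upwards [isOpen_ball.mem_nhds hz] with w hw
      have hw1 : ‖w‖ < 1 := by simpa using hw
      rw [schwarzIntegral_sub hUc continuous_const hw1, schwarzIntegral_const _ hw1]
    rw [h1.unique (hasDerivAt_schwarzIntegral (hUc.sub continuous_const) hz1), norm_mul, hpin]
    have h2 : ‖∫ t in (0 : ℝ)..2 * Real.pi,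
        (U t - u ζ) * (2 * circleMap 0 1 t / (circleMap 0 1 t - z) ^ 2)‖ ≤
        ∫ t in (0 : ℝ)..2 * Real.pi, (4 * K) * ‖circleMap 0 1 t - z‖ ^ (α - 2) := by
      refine intervalIntegral.norm_integral_le_of_norm_le (by positivity)
        (Eventually.of_forall fun t _ => ?_)
        ((continuous_const.mul (continuous_kernel_rpow hz1 _)).intervalIntegrable _ _)
      rw [norm_mul, norm_div, norm_mul, norm_pow]
      simp only [norm_circleMap_zero, abs_one, mul_one, Complex.norm_ofNat]
      calc _ ≤ K * ‖circleMap 0 1 t - ζ‖ ^ α * (2 / ‖circleMap 0 1 t - z‖ ^ 2) := by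
            gcongr; exact hUK t ζ hζ
        _ = 2 * K * (‖circleMap 0 1 t - ζ‖ ^ α / ‖circleMap 0 1 t - z‖ ^ 2) := by ring
        _ ≤ 2 * K * (2 * ‖circleMap 0 1 t - z‖ ^ (α - 2)) := by
            gcongr; exact norm_circleMap_sub_rpow_le hα0 hα1 hz1 hζz t
        _ = _ := by ring
    calc _ ≤ 1 * (4 * K * (J * (1 - ‖z‖) ^ (α - 1))) := by
          gcongr; exact h2.trans (hker z hz1 _ (by positivity))
      _ = _ := by ring
  have hD0 : 0 ≤ 4 * J * K := by positivity
  obtain ⟨G, hGc, hGe, hGh⟩ := exists_holder_extension hα0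
    (hardyLittlewood hα0 hα1 hD0 hd hb)
  have hGd : DifferentiableOn ℂ G (ball 0 1) := by
    refine DifferentiableOn.congr (f := F) (fun z hz => ?_) hGe
    exact (hd z hz).differentiableAt.differentiableWithinAt
  have hcl : closure (ball (0 : ℂ) 1) = closedBall 0 1 := closure_ball _ one_ne_zero
  refine ⟨fun z => I * G z, continuousOn_const.mul hGc, hGd.const_mul I, ?_, ?_, ?_⟩
  · intro ζ hζ
    have hζ1 : ‖ζ‖ = 1 := by simpa using hζ
    -- the real part of `F` converges radially to `u`
    have hbound : ∀ r : ℝ, 0 ≤ r → r < 1 →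
        |(F ((r : ℂ) * ζ)).re - u ζ| ≤ 4 * K * J * (1 - r) ^ α := by
      intro r hr0 hr1
      have hn : ‖(r : ℂ) * ζ‖ = r := by simp [hζ1, abs_of_nonneg hr0]
      have hz1 : ‖(r : ℂ) * ζ‖ < 1 := by rw [hn]; exact hr1
      have hζz : ‖ζ - (r : ℂ) * ζ‖ = 1 - ‖(r : ℂ) * ζ‖ := by
        have : ζ - (r : ℂ) * ζ = ((1 - r : ℝ) : ℂ) * ζ := by push_cast; ring
        rw [hn, this, norm_mul, norm_real, Real.norm_of_nonneg (by linarith), hζ1, mul_one]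
      set z := (r : ℂ) * ζ with hz
      have h1 : F z - u ζ = schwarzIntegral (fun t => U t - u ζ) z := by
        rw [schwarzIntegral_sub hUc continuous_const hz1, schwarzIntegral_const _ hz1]
      have h2 : (F z).re - u ζ = (2 * Real.pi)⁻¹ * ∫ t in (0 : ℝ)..2 * Real.pi,
          (u (circleMap 0 1 t) - u ζ) *
            ((circleMap 0 1 t + z) / (circleMap 0 1 t - z)).re := by
        have : (F z).re - u ζ = (F z - u ζ).re := by simp
        rw [this, h1, schwarzIntegral]
        have h3 : (2 * Real.pi : ℂ)⁻¹ = (((2 * Real.pi)⁻¹ : ℝ) : ℂ) := by push_cast; rfl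
        rw [h3, re_ofReal_mul]
        congr 1
        have h4 := (continuous_schwarz_integrand (hUc.sub
          (continuous_const (y := (u ζ : ℂ)))) hz1).intervalIntegrable 0 (2 * Real.pi)
          (μ := volume)
        have h5 := reCLM.intervalIntegral_comp_comm h4
        simp only [reCLM_apply, Pi.sub_apply] at h5
        rw [← h5]
        congr 1
        ext t
        rw [hUdef]
        simp only
        rw [← ofReal_sub, re_ofReal_mul]
      have h3 : ∀ t : ℝ, |((circleMap 0 1 t + z) / (circleMap 0 1 t - z)).re| ≤
          2 * (1 - r) / ‖circleMap 0 1 t - z‖ ^ 2 := by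
        intro t
        have h4 := congrFun (poissonKernel_eq_re_herglotzRieszKernel (c := 0) (w := z))
          (circleMap 0 1 t)
        simp only [poissonKernel, herglotzRieszKernel, Function.comp, sub_zero,
          norm_circleMap_zero, abs_one, hn] at h4
        rw [← h4, abs_of_nonneg (div_nonneg (by nlinarith) (by positivity))]
        gcongr
        nlinarith
      rw [h2, abs_mul, abs_of_pos (by positivity)]
      have h4 : ‖∫ t in (0 : ℝ)..2 * Real.pi, (u (circleMap 0 1 t) - u ζ) *
            ((circleMap 0 1 t + z) / (circleMap 0 1 t - z)).re‖ ≤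
          ∫ t in (0 : ℝ)..2 * Real.pi, (4 * K * (1 - r)) * ‖circleMap 0 1 t - z‖ ^ (α - 2) := by
        refine intervalIntegral.norm_integral_le_of_norm_le (by positivity)
          (Eventually.of_forall fun t _ => ?_)
          ((continuous_const.mul (continuous_kernel_rpow hz1 _)).intervalIntegrable _ _)
        rw [norm_mul, Real.norm_eq_abs, Real.norm_eq_abs]
        have hr2 : 0 ≤ 1 - r := by linarith
        calc _ ≤ K * ‖circleMap 0 1 t - ζ‖ ^ α *
              (2 * (1 - r) / ‖circleMap 0 1 t - z‖ ^ 2) := by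
              gcongr
              · exact huK _ (hS t) ζ hζ
              · exact h3 t
          _ = 2 * K * (1 - r) *
              (‖circleMap 0 1 t - ζ‖ ^ α / ‖circleMap 0 1 t - z‖ ^ 2) := by ring
          _ ≤ 2 * K * (1 - r) * (2 * ‖circleMap 0 1 t - z‖ ^ (α - 2)) := by
              gcongr; exact norm_circleMap_sub_rpow_le hα0 hα1 hz1 hζz t
          _ = _ := by ring
      have hr2 : 0 < 1 - r := by linarith
      have h5 := h4.trans (hker z hz1 _ (by positivity))
      rw [Real.norm_eq_abs] at h5
      calc _ ≤ 1 * (4 * K * (1 - r) * (J * (1 - ‖z‖) ^ (α - 1))) := by gcongr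
        _ = 4 * K * J * ((1 - r) ^ (α - 1) * (1 - r)) := by rw [hn]; ring
        _ = _ := by rw [← Real.rpow_add_one hr2.ne']; ring_nf
    have hlim1 : Tendsto (fun r : ℝ => (G ((r : ℂ) * ζ)).re) (𝓝[Ioo 0 1] 1) (𝓝 (G ζ).re) := by
      refine (continuous_re.tendsto _).comp ?_
      have h1 : Tendsto (fun r : ℝ => (r : ℂ) * ζ) (𝓝[Ioo 0 1] 1) (𝓝[closedBall 0 1] ζ) := by
        refine tendsto_nhdsWithin_iff.2 ⟨?_, ?_⟩
        · have : Continuous fun r : ℝ => (r : ℂ) * ζ := by fun_prop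
          have h2 := this.tendsto 1
          simp only [ofReal_one, one_mul] at h2
          exact h2.mono_left nhdsWithin_le_nhds
        · filter_upwards [self_mem_nhdsWithin] with r hr
          simp [hζ1, abs_of_pos hr.1, hr.2.le]
      exact (hGc ζ (by simp [hζ1])).tendsto.comp h1
    have hlim2 : Tendsto (fun r : ℝ => (G ((r : ℂ) * ζ)).re) (𝓝[Ioo 0 1] 1) (𝓝 (u ζ)) := by
      rw [tendsto_iff_dist_tendsto_zero]
      refine squeeze_zero' (g := fun r => 4 * K * J * (1 - r) ^ α)
        (Eventually.of_forall fun _ => dist_nonneg) ?_ ?_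
      · filter_upwards [self_mem_nhdsWithin] with r hr
        rw [hGe (by simp [hζ1, abs_of_pos hr.1, hr.2])]
        exact hbound r hr.1.le hr.2
      · have : Continuous fun r : ℝ => 4 * K * J * (1 - r) ^ α :=
          continuous_const.mul (Continuous.rpow_const (by fun_prop) fun _ => Or.inr hα0.le)
        have h2 := this.tendsto 1
        simp only [sub_self, Real.zero_rpow hα0.ne', mul_zero] at h2
        exact h2.mono_left nhdsWithin_le_nhds
    have hne : (𝓝[Ioo (0 : ℝ) 1] 1).NeBot := by
      rw [← mem_closure_iff_nhdsWithin_neBot, closure_Ioo zero_ne_one]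
      simp
    simpa using tendsto_nhds_unique hlim1 hlim2
  · intro ζ₁ h₁ ζ₂ h₂
    rw [← mul_sub, norm_mul, norm_I, one_mul]
    refine (hGh ζ₁ (sphere_subset_closedBall h₁) ζ₂ (sphere_subset_closedBall h₂)).trans
      (le_of_eq (by ring))
  · intro η hη0 hη1
    have hball : ∀ z ∈ ball (0 : ℂ) 1,
        ‖I * G z‖ ≤ 2 / η * M + (2 / α + 1) * (4 * J) * K * η ^ α := by
      intro z hz
      rw [norm_mul, norm_I, one_mul, hGe hz]
      have h1 := hardyLittlewood_radial hα0 hα1 hD0 hd hb hz hη0.le hη1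
      set w := ((1 - η : ℝ) : ℂ) * z with hw
      have hz1 : ‖z‖ < 1 := by simpa using hz
      have hwn : ‖w‖ ≤ 1 - η := by
        rw [hw, norm_mul, norm_real, Real.norm_of_nonneg (by linarith)]
        nlinarith [norm_nonneg z]
      have h2 : ‖F w‖ ≤ 2 / η * M := by
        rw [hF, schwarzIntegral, norm_mul, hpin]
        have h3 : ‖∫ t in (0 : ℝ)..2 * Real.pi,
            U t * ((circleMap 0 1 t + w) / (circleMap 0 1 t - w))‖ ≤
            M * (2 / η) * |2 * Real.pi - 0| := by
          refine intervalIntegral.norm_integral_le_of_norm_le_const fun t _ => ?_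
          rw [norm_mul, norm_div]
          have h4 := norm_circleMap_sub_ge (z := w) t
          have h5 : ‖circleMap 0 1 t + w‖ ≤ 2 := by
            refine (norm_add_le _ _).trans ?_
            simp; linarith
          gcongr
          · exact hUM t
          · linarith
        rw [sub_zero, abs_of_pos (by positivity)] at h3
        calc _ ≤ (2 * Real.pi)⁻¹ * (M * (2 / η) * (2 * Real.pi)) := by gcongr
          _ = _ := by field_simp
      calc ‖F z‖ ≤ ‖F w‖ + ‖F z - F w‖ := by
            have := norm_add_le (F w) (F z - F w); simpa using this
        _ ≤ 2 / η * M + 4 * J * K / α * η ^ α := add_le_add h2 h1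
        _ ≤ _ := by
            gcongr
            have : (2 / α + 1) * (4 * J) * K = 4 * J * K / α + (1 / α + 1) * (4 * J * K) := by ring
            rw [this]
            have : 0 ≤ (1 / α + 1) * (4 * J * K) := by positivity
            linarith
    intro z hz
    rw [← hcl] at hz
    refine closure_minimal (s := ball (0 : ℂ) 1)
      (t := {z ∈ closedBall (0 : ℂ) 1 | ‖I * G z‖ ≤ 2 / η * M + (2 / α + 1) * (4 * J) * K * η ^ α})
      (fun z hz => ⟨ball_subset_closedBall hz, hball z hz⟩) ?_ hz |>.2
    exact isClosed_closedBall.isClosed_le (continuousOn_const.mul hGc).norm continuousOn_const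

/-! ### Real boundary values near the identity -/

/-- `f` is Hölder of exponent `α` with constant `K` on the unit circle. -/
def HolderCircle (α K : ℝ) (f : ℂ → ℂ) : Prop :=
  ∀ ζ₁ ∈ sphere (0 : ℂ) 1, ∀ ζ₂ ∈ sphere (0 : ℂ) 1, ‖f ζ₁ - f ζ₂‖ ≤ K * ‖ζ₁ - ζ₂‖ ^ α

/-- The class of functions continuous on the closed disc, holomorphic on the open disc and
Hölder of exponent `α` on the unit circle. -/
structure DiscClass (α : ℝ) (f : ℂ → ℂ) : Prop where
  cont : ContinuousOn f (closedBall 0 1)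
  diff : DifferentiableOn ℂ f (ball 0 1)
  hold : ∃ K, HolderCircle α K f

/-- Matrix functions with entries continuous on the closed disc and holomorphic inside, with
entrywise sup bound `s` and entrywise Hölder constant `H` on the circle. -/
structure IterBound (α s H : ℝ) {m : ℕ} (d : ℂ → Matrix (Fin m) (Fin m) ℂ) : Prop where
  cont : ∀ i j, ContinuousOn (fun z => d z i j) (closedBall 0 1)
  diff : ∀ i j, DifferentiableOn ℂ (fun z => d z i j) (ball 0 1)
  bound : ∀ i j, ∀ z ∈ closedBall (0 : ℂ) 1, ‖d z i j‖ ≤ s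
  hold : ∀ i j, HolderCircle α H (fun z => d z i j)

lemma mul_entry_norm_le {m : ℕ} {X Y : Matrix (Fin m) (Fin m) ℂ} {a b : ℝ} (ha : 0 ≤ a)
    (hX : ∀ i j, ‖X i j‖ ≤ a) (hY : ∀ i j, ‖Y i j‖ ≤ b) (i j) :
    ‖(X * Y) i j‖ ≤ m * (a * b) := by
  rw [Matrix.mul_apply]
  refine (norm_sum_le _ _).trans ?_
  refine (Finset.sum_le_card_nsmul _ _ (a * b) fun k _ => ?_).trans (by simp)
  rw [norm_mul]
  exact mul_le_mul (hX _ _) (hY _ _) (norm_nonneg _) ha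

lemma mul_entry_holder {α : ℝ} {m : ℕ} {X Y : ℂ → Matrix (Fin m) (Fin m) ℂ} {a b a' b' : ℝ}
    (ha : 0 ≤ a)
    (hX : ∀ ζ ∈ sphere (0 : ℂ) 1, ∀ i j, ‖X ζ i j‖ ≤ a)
    (hY : ∀ ζ ∈ sphere (0 : ℂ) 1, ∀ i j, ‖Y ζ i j‖ ≤ b)
    (hX' : ∀ i j, HolderCircle α a' (fun z => X z i j))
    (hY' : ∀ i j, HolderCircle α b' (fun z => Y z i j)) (ha' : 0 ≤ a') (i j) :
    HolderCircle α (m * (a * b' + a' * b)) (fun z => (X z * Y z) i j) := by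
  intro ζ₁ h₁ ζ₂ h₂
  have h : (X ζ₁ * Y ζ₁) i j - (X ζ₂ * Y ζ₂) i j =
      (X ζ₁ * (Y ζ₁ - Y ζ₂)) i j + ((X ζ₁ - X ζ₂) * Y ζ₂) i j := by
    rw [mul_sub, sub_mul, Matrix.sub_apply, Matrix.sub_apply]; ring
  simp only [h]
  refine (norm_add_le _ _).trans ?_
  have e1 := mul_entry_norm_le ha (hX ζ₁ h₁) (Y := Y ζ₁ - Y ζ₂)
    (fun i j => hY' i j ζ₁ h₁ ζ₂ h₂) i j
  have e2 := mul_entry_norm_le (by positivity) (X := X ζ₁ - X ζ₂)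
    (fun i j => hX' i j ζ₁ h₁ ζ₂ h₂) (hY ζ₂ h₂) i j
  refine (add_le_add e1 e2).trans (le_of_eq (by ring))

/-- One step of the Neumann iteration: solve `Im d' = -Im (E d)` on the circle, with both
bounds improved by the factor `ρ`. -/
lemma iter_step {α C : ℝ} {m : ℕ} {K ε η δ ρ : ℝ}
    (hK : 0 ≤ K) (hε : 0 < ε) (hη : 0 < η) (hη1 : η ≤ 1) (hδ : 0 < δ)
    (hS : ∀ (u : ℂ → ℝ) (M K : ℝ), 0 ≤ M → 0 ≤ K → (∀ ζ ∈ sphere (0 : ℂ) 1, |u ζ| ≤ M) →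
      (∀ ζ₁ ∈ sphere (0 : ℂ) 1, ∀ ζ₂ ∈ sphere (0 : ℂ) 1,
        |u ζ₁ - u ζ₂| ≤ K * ‖ζ₁ - ζ₂‖ ^ α) →
      ∃ h : ℂ → ℂ, ContinuousOn h (closedBall 0 1) ∧ DifferentiableOn ℂ h (ball 0 1) ∧
        (∀ ζ ∈ sphere (0 : ℂ) 1, (h ζ).im = u ζ) ∧
        (∀ ζ₁ ∈ sphere (0 : ℂ) 1, ∀ ζ₂ ∈ sphere (0 : ℂ) 1,
          ‖h ζ₁ - h ζ₂‖ ≤ C * K * ‖ζ₁ - ζ₂‖ ^ α) ∧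
        ∀ η : ℝ, 0 < η → η ≤ 1 → ∀ z ∈ closedBall (0 : ℂ) 1,
          ‖h z‖ ≤ 2 / η * M + C * K * η ^ α)
    (h1 : C * (m * (δ / ε + K)) ≤ ρ / ε)
    (h2 : 2 / η * (m * δ) + C * (m * (δ / ε + K)) * η ^ α ≤ ρ)
    {E : ℂ → Matrix (Fin m) (Fin m) ℂ} (hE : ∀ ζ ∈ sphere (0 : ℂ) 1, ∀ i j, ‖E ζ i j‖ ≤ δ)
    (hE' : ∀ i j, HolderCircle α K (fun z => E z i j))
    {s : ℝ} (hs : 0 ≤ s) {d : ℂ → Matrix (Fin m) (Fin m) ℂ} (hd : IterBound α s (s / ε) d) :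
    ∃ d' : ℂ → Matrix (Fin m) (Fin m) ℂ, IterBound α (s * ρ) (s * ρ / ε) d' ∧
      ∀ ζ ∈ sphere (0 : ℂ) 1, ∀ i j, (d' ζ i j).im = -((E ζ * d ζ) i j).im := by
  have hb : ∀ ζ ∈ sphere (0 : ℂ) 1, ∀ i j, ‖d ζ i j‖ ≤ s := fun ζ hζ i j =>
    hd.bound i j ζ (sphere_subset_closedBall hζ)
  have key := fun i j => hS (fun ζ => -((E ζ * d ζ) i j).im) (m * (δ * s))
    (m * (δ * (s / ε) + K * s)) (by positivity) (by positivity)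
    (fun ζ hζ => by
      rw [abs_neg]
      exact (abs_im_le_norm _).trans (mul_entry_norm_le hδ.le (hE ζ hζ) (hb ζ hζ) i j))
    (fun ζ₁ h₁ ζ₂ h₂ => by
      have := mul_entry_holder hδ.le hE hb hE' hd.hold hK i j ζ₁ h₁ ζ₂ h₂
      refine le_trans ?_ this
      rw [← abs_neg, neg_sub_neg, neg_sub, ← sub_im]
      exact abs_im_le_norm _)
  choose h hc hdf him hh hbd using key
  refine ⟨fun z => Matrix.of fun i j => h i j z, ⟨hc, hdf, ?_, ?_⟩, fun ζ hζ i j => him i j ζ hζ⟩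
  · intro i j z hz
    refine (hbd i j η hη hη1 z hz).trans ?_
    calc _ = s * (2 / η * (m * δ) + C * (m * (δ / ε + K)) * η ^ α) := by ring
      _ ≤ _ := by gcongr
  · intro i j ζ₁ h₁ ζ₂ h₂
    refine (hh i j ζ₁ h₁ ζ₂ h₂).trans ?_
    gcongr
    calc _ = s * (C * (m * (δ / ε + K))) := by ring
      _ ≤ s * (ρ / ε) := by gcongr
      _ = _ := by ring

/-- A matrix near the identity is strictly diagonally dominant. -/
lemma det_ne_zero_of_near_one {m : ℕ} {X : Matrix (Fin m) (Fin m) ℂ} {τ : ℝ}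
    (ht : ∀ i j, ‖X i j - (1 : Matrix (Fin m) (Fin m) ℂ) i j‖ ≤ τ) (hτ : (m : ℝ) * τ < 1) :
    X.det ≠ 0 := by
  refine det_ne_zero_of_sum_row_lt_diag fun k => ?_
  have hk1 : 1 - τ ≤ ‖X k k‖ := by
    have := ht k k
    rw [Matrix.one_apply_eq, norm_sub_rev] at this
    have h3 := norm_sub_norm_le (1 : ℂ) (X k k)
    rw [norm_one] at h3
    linarith
  have hk2 : ∑ j ∈ Finset.univ.erase k, ‖X k j‖ ≤ ((m : ℝ) - 1) * τ := by
    refine (Finset.sum_le_card_nsmul _ _ τ fun j hj => ?_).trans ?_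
    · have := ht k j
      rwa [Matrix.one_apply_ne (Finset.ne_of_mem_erase hj).symm, sub_zero] at this
    · rw [Finset.card_erase_of_mem (Finset.mem_univ _), Finset.card_univ, Fintype.card_fin,
        nsmul_eq_mul, Nat.cast_sub (Nat.one_le_iff_ne_zero.2 (by rintro rfl; exact k.elim0))]
      simp
  linarith

/-- If `E` is small on the circle (relative to a given bound `K` for its Hölder constant), then
there is an invertible holomorphic `Ψ` close to the identity with `(1 + E) Ψ` real on the
circle. -/
lemma exists_near_identity {α : ℝ} (hα0 : 0 < α) (hα1 : α < 1) (m : ℕ) {K : ℝ} (hK : 0 ≤ K) :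
    ∃ δ > 0, ∀ E : ℂ → Matrix (Fin m) (Fin m) ℂ,
      (∀ ζ ∈ sphere (0 : ℂ) 1, ∀ i j, ‖E ζ i j‖ ≤ δ) →
      (∀ i j, HolderCircle α K (fun z => E z i j)) →
      (∀ ζ ∈ sphere (0 : ℂ) 1, (1 + E ζ).det ≠ 0) ∧
      ∃ Ψ : ℂ → Matrix (Fin m) (Fin m) ℂ, (∀ i j, DiscClass α (fun z => Ψ z i j)) ∧
        (∀ z ∈ closedBall (0 : ℂ) 1, (Ψ z).det ≠ 0) ∧
        ∀ ζ ∈ sphere (0 : ℂ) 1, ∀ i j, (((1 + E ζ) * Ψ ζ) i j).im = 0 := by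
  obtain ⟨C, hC, hS⟩ := exists_schwarz hα0 hα1
  set ρ : ℝ := 1 / (2 * (m + 1)) with hρ
  have hρ0 : 0 < ρ := by positivity
  have hρ1 : ρ < 1 := by
    rw [hρ, div_lt_one (by positivity)]
    have : (0 : ℝ) ≤ m := by positivity
    linarith
  set ε : ℝ := ρ / (2 * (C * m * K + 1)) with hεd
  have hε : 0 < ε := by positivity
  set b : ℝ := min 1 (ρ / (2 * (C * m * (1 + K) + 1))) with hbd
  have hb0 : 0 < b := by positivity
  set η : ℝ := b ^ (1 / α) with hηd
  have hη : 0 < η := by positivity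
  have hη1 : η ≤ 1 := Real.rpow_le_one hb0.le (min_le_left _ _) (by positivity)
  have hηb : η ^ α = b := by
    rw [hηd, ← Real.rpow_mul hb0.le, one_div_mul_cancel hα0.ne', Real.rpow_one]
  set δ : ℝ := min ε (min (ρ / (2 * (C * m + 1))) (ρ * η / (4 * (m + 1)))) with hδd
  have hδ : 0 < δ := by positivity
  have hδ1 : δ ≤ ε := min_le_left _ _
  have hδ2 : δ ≤ ρ / (2 * (C * m + 1)) := (min_le_right _ _).trans (min_le_left _ _)
  have hδ3 : δ ≤ ρ * η / (4 * (m + 1)) := (min_le_right _ _).trans (min_le_right _ _)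
  have aux : ∀ x y : ℝ, 0 ≤ x → 0 ≤ y → x * (y / (2 * (x + 1))) ≤ y / 2 := by
    intro x y hx hy
    rw [← mul_div_assoc, div_le_div_iff₀ (by positivity) (by positivity)]
    nlinarith
  have h1 : C * (m * (δ / ε + K)) ≤ ρ / ε := by
    rw [le_div_iff₀ hε]
    have e1 : C * m * δ ≤ ρ / 2 :=
      (mul_le_mul_of_nonneg_left hδ2 (by positivity)).trans (aux _ _ (by positivity) hρ0.le)
    have e2 : C * m * K * ε ≤ ρ / 2 := aux _ _ (by positivity) hρ0.le
    calc _ = C * m * (δ / ε * ε) + C * m * K * ε := by ring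
      _ = C * m * δ + C * m * K * ε := by rw [div_mul_cancel₀ _ hε.ne']
      _ ≤ _ := by linarith
  have h2 : 2 / η * (m * δ) + C * (m * (δ / ε + K)) * η ^ α ≤ ρ := by
    have e1 : 2 / η * (m * δ) ≤ ρ / 2 := by
      rw [div_mul_eq_mul_div, div_le_iff₀ hη]
      rw [le_div_iff₀ (by positivity)] at hδ3
      nlinarith
    have e2 : C * (m * (δ / ε + K)) * η ^ α ≤ ρ / 2 := by
      rw [hηb]
      have : δ / ε ≤ 1 := (div_le_one hε).2 hδ1
      calc C * (m * (δ / ε + K)) * b ≤ C * (m * (1 + K)) * (ρ / (2 * (C * m * (1 + K) + 1))) := by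
            gcongr
            exact min_le_right _ _
        _ = C * m * (1 + K) * (ρ / (2 * (C * m * (1 + K) + 1))) := by ring
        _ ≤ _ := aux _ _ (by positivity) hρ0.le
    linarith
  have hδm : m * δ < 1 := by
    have : δ ≤ ρ := hδ2.trans (div_le_self hρ0.le (by nlinarith [show 0 ≤ C * m by positivity]))
    calc m * δ ≤ m * ρ := by gcongr
      _ < 1 := by
        rw [hρ, ← mul_div_assoc, div_lt_one (by positivity)]
        linarith [show (0 : ℝ) ≤ m by positivity]
  refine ⟨δ, hδ, fun E hE hE' => ⟨fun ζ hζ => det_ne_zero_of_near_one (τ := δ) (fun i j => ?_) hδm,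
    ?_⟩⟩
  · rw [Matrix.add_apply, add_sub_cancel_left]
    exact hE ζ hζ i j
  have step : ∀ (n : ℕ) (d : ℂ → Matrix (Fin m) (Fin m) ℂ), IterBound α (ρ ^ n) (ρ ^ n / ε) d →
      ∃ d' : ℂ → Matrix (Fin m) (Fin m) ℂ, IterBound α (ρ ^ (n + 1)) (ρ ^ (n + 1) / ε) d' ∧
      ∀ ζ ∈ sphere (0 : ℂ) 1, ∀ i j, (d' ζ i j).im = -((E ζ * d ζ) i j).im := by
    intro n d hd
    rw [pow_succ]
    exact iter_step hK hε hη hη1 hδ hS h1 h2 hE hE' (by positivity) hd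
  choose! nxt hn1 hn2 using step
  set d : ℕ → ℂ → Matrix (Fin m) (Fin m) ℂ := fun n => Nat.rec (fun _ => 1) nxt n with hdd
  have hd0 : d 0 = fun _ => 1 := rfl
  have hds : ∀ n, d (n + 1) = nxt n (d n) := fun n => rfl
  have hB : ∀ n, IterBound α (ρ ^ n) (ρ ^ n / ε) (d n) := by
    intro n
    induction n with
    | zero =>
      rw [hd0]
      refine ⟨fun _ _ => continuousOn_const, fun _ _ => differentiableOn_const _, ?_, ?_⟩
      · intro i j z _
        rw [Matrix.one_apply]
        split_ifs <;> simp
      · intro i j ζ₁ _ ζ₂ _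
        simp only [sub_self, norm_zero]
        positivity
    | succ n ih => rw [hds]; exact hn1 n _ ih
  have him : ∀ n, ∀ ζ ∈ sphere (0 : ℂ) 1, ∀ i j,
      (d (n + 1) ζ i j).im = -((E ζ * d n ζ) i j).im := by
    intro n
    rw [hds]
    exact hn2 n _ (hB n)
  have hgeo : Summable fun n : ℕ => ρ ^ n := summable_geometric_of_lt_one hρ0.le hρ1
  have hsum : ∀ i j, ∀ z ∈ closedBall (0 : ℂ) 1, Summable fun n => d n z i j := fun i j z hz =>
    Summable.of_norm_bounded hgeo fun n => (hB n).bound i j z hz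
  refine ⟨fun z => Matrix.of fun i j => ∑' n, d n z i j, fun i j => ⟨?_, ?_, ?_⟩, ?_, ?_⟩
  · exact continuousOn_tsum (fun n => (hB n).cont i j) hgeo
      (fun n z hz => (hB n).bound i j z hz)
  · exact differentiableOn_tsum_of_summable_norm hgeo (fun n => (hB n).diff i j) isOpen_ball
      (fun n z hz => (hB n).bound i j z (ball_subset_closedBall hz))
  · refine ⟨∑' n, ρ ^ n / ε, fun ζ₁ h₁ ζ₂ h₂ => ?_⟩
    simp only [Matrix.of_apply]
    rw [← (hsum i j ζ₁ (sphere_subset_closedBall h₁)).tsum_sub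
      (hsum i j ζ₂ (sphere_subset_closedBall h₂))]
    exact tsum_of_norm_bounded ((hgeo.div_const ε).hasSum.mul_right _)
      (fun n => (hB n).hold i j ζ₁ h₁ ζ₂ h₂)
  · intro z hz
    have ht : ∀ i j, ‖(∑' n, d n z i j) - (1 : Matrix (Fin m) (Fin m) ℂ) i j‖ ≤ ρ / (1 - ρ) := by
      intro i j
      rw [(hsum i j z hz).tsum_eq_zero_add, hd0, add_sub_cancel_left]
      have hg : HasSum (fun n : ℕ => ρ ^ (n + 1)) (ρ / (1 - ρ)) := by
        simp_rw [pow_succ]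
        rw [div_eq_inv_mul]
        exact (hasSum_geometric_of_lt_one hρ0.le hρ1).mul_right ρ
      exact tsum_of_norm_bounded hg fun n => (hB (n + 1)).bound i j z hz
    have hτ : (m : ℝ) * (ρ / (1 - ρ)) < 1 := by
      rw [← mul_div_assoc, div_lt_one (by linarith), hρ]
      field_simp
      linarith
    exact det_ne_zero_of_near_one ht hτ
  · intro ζ hζ i j
    have hz := sphere_subset_closedBall hζ
    have s1 : HasSum (fun n => (d n ζ i j).im) (∑' n, d n ζ i j).im :=
      imCLM.hasSum (hsum i j ζ hz).hasSum
    have s2 : HasSum (fun n => ((E ζ * d n ζ) i j).im)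
        ((E ζ * Matrix.of fun i j => ∑' n, d n ζ i j) i j).im := by
      refine imCLM.hasSum ?_
      simp only [Matrix.mul_apply]
      exact hasSum_sum fun k _ => (hsum k j ζ hz).hasSum.mul_left _
    have s3 := (hasSum_nat_add_iff' (f := fun n => (d n ζ i j).im) 1).2 s1
    simp only [him _ ζ hζ, Finset.range_one, Finset.sum_singleton] at s3
    have h0 : (d 0 ζ i j).im = 0 := by
      simp only [hd0, Matrix.one_apply]
      split_ifs <;> simp
    rw [h0, sub_zero] at s3
    have := s3.unique s2.neg
    rw [add_mul, one_mul, Matrix.add_apply, add_im]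
    simp only [Matrix.of_apply]
    rw [this]
    exact neg_add_cancel _

/-! ### Trigonometric approximation -/

lemma HolderCircle.continuousOn {α K : ℝ} (hα0 : 0 < α) {f : ℂ → ℂ} (hf : HolderCircle α K f) :
    ContinuousOn f (sphere 0 1) := by
  intro z hz
  rw [ContinuousWithinAt, tendsto_iff_norm_sub_tendsto_zero]
  have h : Tendsto (fun w : ℂ => K * ‖w - z‖ ^ α) (𝓝[sphere 0 1] z) (𝓝 0) := by
    have : ContinuousAt (fun w : ℂ => K * ‖w - z‖ ^ α) z :=
      continuousAt_const.mul (ContinuousAt.rpow_const (by fun_prop) (Or.inr hα0.le))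
    have h2 := this.tendsto
    simp only [sub_self, norm_zero, Real.zero_rpow hα0.ne', mul_zero] at h2
    exact h2.mono_left nhdsWithin_le_nhds
  refine squeeze_zero' (Eventually.of_forall fun w => norm_nonneg _) ?_ h
  filter_upwards [self_mem_nhdsWithin] with w hw using hf w hw z hz

/-- The unnormalized de la Vallée-Poussin kernel. -/
noncomputable def vpKernel (n : ℕ) (t : ℝ) : ℝ := ((1 + Real.cos t) / 2) ^ n

lemma vpKernel_nonneg (n : ℕ) (t : ℝ) : 0 ≤ vpKernel n t :=
  pow_nonneg (by linarith [Real.neg_one_le_cos t]) _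

lemma continuous_vpKernel (n : ℕ) : Continuous (vpKernel n) := by
  unfold vpKernel; fun_prop

lemma integral_vpKernel_pos (n : ℕ) : 0 < ∫ t in -Real.pi..Real.pi, vpKernel n t := by
  refine intervalIntegral.intervalIntegral_pos_of_pos_on
    ((continuous_vpKernel n).intervalIntegrable _ _) (fun t ht => ?_) (by linarith [Real.pi_pos])
  refine pow_pos ?_ _
  have := Real.cos_lt_cos_of_nonneg_of_le_pi (abs_nonneg t) le_rfl (abs_lt.2 ht)
  rw [Real.cos_pi, Real.cos_abs] at this
  linarith

/-- The normalized kernels form an approximate identity, since `(1 + cos t) / 2` has its unique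
maximum at `0`. -/
lemma tendsto_vpKernel {g : ℝ → ℝ} (hg : Continuous g) :
    Tendsto (fun n : ℕ => (∫ t in -Real.pi..Real.pi, vpKernel n t)⁻¹ *
      ∫ t in -Real.pi..Real.pi, vpKernel n t * g t) atTop (𝓝 (g 0)) := by
  have hpi := Real.pi_pos
  have := tendsto_setIntegral_pow_smul_of_unique_maximum_of_isCompact_of_continuousOn
    (μ := volume) (s := Icc (-Real.pi) Real.pi) (c := fun t => (1 + Real.cos t) / 2) (g := g)
    (x₀ := 0) isCompact_Icc (by fun_prop) ?_ ?_ ?_ ?_ hg.continuousOn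
  · refine this.congr fun n => ?_
    rw [intervalIntegral.integral_of_le (by linarith), intervalIntegral.integral_of_le (by linarith),
      ← integral_Icc_eq_integral_Ioc, ← integral_Icc_eq_integral_Ioc]
    rfl
  · intro t ht hne
    have h1 := Real.cos_lt_cos_of_nonneg_of_le_pi le_rfl (abs_le.2 ht) (abs_pos.2 hne)
    rw [Real.cos_abs] at h1
    linarith
  · intro t _
    linarith [Real.neg_one_le_cos t]
  · simp
  · rw [interior_Icc, closure_Ioo (by linarith)]
    constructor <;> linarith

/-- The kernel is a trigonometric polynomial of degree `n`. -/
lemma vpKernel_mul_pow (n : ℕ) (t : ℝ) :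
    (vpKernel n t : ℂ) * exp (t * I) ^ n = (4 : ℂ)⁻¹ ^ n * (1 + exp (t * I)) ^ (2 * n) := by
  rw [vpKernel, pow_mul, ← mul_pow]
  push_cast
  rw [← mul_pow]
  congr 1
  have h : exp (-(t * I)) * exp (t * I) = 1 := by rw [← exp_add]; simp
  rw [Complex.cos, neg_mul]
  linear_combination (1 / 4 : ℂ) * h

/-- Trigonometric approximation of Hölder functions: the degree `n` depends only on the
Hölder constant and the precision, and convolution with a probability kernel does not
increase the Hölder constant. -/
lemma exists_trig_approx {α H : ℝ} (hα0 : 0 < α) {δ : ℝ} (hδ : 0 < δ) :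
    ∃ n : ℕ, ∀ f : ℂ → ℂ, HolderCircle α H f → ∃ p : Polynomial ℂ,
      (∀ ζ ∈ sphere (0 : ℂ) 1, ‖(ζ ^ n)⁻¹ * p.eval ζ - f ζ‖ ≤ δ) ∧
      HolderCircle α H (fun ζ => (ζ ^ n)⁻¹ * p.eval ζ) := by
  have hpi := Real.pi_pos
  have hg : Continuous fun t : ℝ => H * ‖exp (-(t * I)) - 1‖ ^ α :=
    continuous_const.mul (Continuous.rpow_const (by fun_prop) fun _ => Or.inr hα0.le)
  have ht := tendsto_vpKernel hg
  simp only [ofReal_zero, zero_mul, neg_zero, exp_zero, sub_self, norm_zero,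
    Real.zero_rpow hα0.ne', mul_zero] at ht
  obtain ⟨n, hn⟩ := (ht.eventually (gt_mem_nhds hδ)).exists
  refine ⟨n, fun f hf => ?_⟩
  set c := ∫ t in -Real.pi..Real.pi, vpKernel n t with hc
  have hc0 : 0 < c := integral_vpKernel_pos n
  have hmem : ∀ t : ℝ, exp (t * I) ∈ sphere (0 : ℂ) 1 := fun t => by simp [norm_exp_ofReal_mul_I]
  have hmem' : ∀ ζ ∈ sphere (0 : ℂ) 1, ∀ t : ℝ, ζ * exp (-(t * I)) ∈ sphere (0 : ℂ) 1 := by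
    intro ζ hζ t
    have := norm_exp_ofReal_mul_I (-t)
    rw [mem_sphere_zero_iff_norm] at hζ ⊢
    rw [norm_mul, hζ, one_mul, ← this]
    push_cast
    ring_nf
  have hfc : Continuous fun t : ℝ => f (exp (t * I)) :=
    (hf.continuousOn hα0).comp_continuous (by fun_prop) hmem
  have hfc' : ∀ ζ ∈ sphere (0 : ℂ) 1, Continuous fun t : ℝ => f (ζ * exp (-(t * I))) :=
    fun ζ hζ => (hf.continuousOn hα0).comp_continuous (by fun_prop) (hmem' ζ hζ)
  set R : ℂ → ℂ := fun ζ => (c : ℂ)⁻¹ *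
    ∫ t in -Real.pi..Real.pi, (vpKernel n t : ℂ) * f (ζ * exp (-(t * I))) with hR
  have hkc : Continuous fun t => (vpKernel n t : ℂ) :=
    continuous_ofReal.comp (continuous_vpKernel n)
  set p : Polynomial ℂ := ∑ l ∈ Finset.range (2 * n + 1), Polynomial.C ((c : ℂ)⁻¹ *
    ((4 : ℂ)⁻¹ ^ n * ((2 * n).choose l *
      ∫ s in -Real.pi..Real.pi, exp (s * I) ^ n * exp (-(s * I)) ^ l * f (exp (s * I))))) *
      Polynomial.X ^ l with hp
  have hRp : ∀ ζ ∈ sphere (0 : ℂ) 1, (ζ ^ n)⁻¹ * p.eval ζ = R ζ := by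
    intro ζ hζ
    rw [mem_sphere_zero_iff_norm] at hζ
    have hζ0 : ζ ≠ 0 := by rintro rfl; simp at hζ
    set θ := arg ζ with hθ
    have hζe : ζ = exp (θ * I) := by
      have := norm_mul_exp_arg_mul_I ζ
      rw [hζ, ofReal_one, one_mul] at this
      exact this.symm
    rw [inv_mul_eq_iff_eq_mul₀ (pow_ne_zero _ hζ0)]
    set F : ℝ → ℂ := fun s => (vpKernel n (θ - s) : ℂ) * f (exp (s * I)) with hF
    have hper : Function.Periodic F (2 * Real.pi) := by
      intro s
      simp only [hF, vpKernel]
      rw [← sub_sub, Real.cos_sub_two_pi]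
      congr 2
      push_cast
      rw [add_mul, exp_add, exp_two_pi_mul_I, mul_one]
    have e1 : ∫ t in -Real.pi..Real.pi, (vpKernel n t : ℂ) * f (ζ * exp (-(t * I))) =
        ∫ s in -Real.pi..Real.pi, F s := by
      have h1 : ∀ t : ℝ, (vpKernel n t : ℂ) * f (ζ * exp (-(t * I))) = F (θ - t) := by
        intro t
        simp only [hF]
        rw [sub_sub_cancel, hζe, ← exp_add]
        congr 3
        push_cast; ring
      simp_rw [h1]
      rw [intervalIntegral.integral_comp_sub_left]
      have := hper.intervalIntegral_add_eq (θ - Real.pi) (-Real.pi)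
      rw [show θ - Real.pi + 2 * Real.pi = θ - -Real.pi by ring,
        show -Real.pi + 2 * Real.pi = Real.pi by ring] at this
      exact this
    have e2 : ∀ s : ℝ, ζ ^ n * F s = ∑ l ∈ Finset.range (2 * n + 1),
        ((4 : ℂ)⁻¹ ^ n * (2 * n).choose l * ζ ^ l) *
          (exp (s * I) ^ n * exp (-(s * I)) ^ l * f (exp (s * I))) := by
      intro s
      have h1 := vpKernel_mul_pow n (θ - s)
      have h2 : exp (((θ - s : ℝ) : ℂ) * I) = ζ * exp (-(s * I)) := by
        rw [hζe, ← exp_add]; congr 1; push_cast; ring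
      have h3 : exp (-(s * I)) * exp (s * I) = 1 := by rw [← exp_add]; simp
      rw [h2] at h1
      have h4 : ζ ^ n * (vpKernel n (θ - s) : ℂ) =
          (4 : ℂ)⁻¹ ^ n * (1 + ζ * exp (-(s * I))) ^ (2 * n) * exp (s * I) ^ n := by
        rw [← h1, mul_pow, mul_assoc, mul_assoc, ← mul_pow, h3, one_pow]
        ring
      simp only [hF]
      rw [← mul_assoc, h4, add_comm (1 : ℂ), add_pow, Finset.mul_sum, Finset.sum_mul,
        Finset.sum_mul]
      refine Finset.sum_congr rfl fun l _ => ?_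
      rw [one_pow, mul_pow]
      ring
    simp only [hR]
    rw [e1, mul_left_comm, ← intervalIntegral.integral_const_mul]
    simp_rw [e2]
    rw [intervalIntegral.integral_finsetSum, hp, Polynomial.eval_finsetSum, Finset.mul_sum]
    · refine Finset.sum_congr rfl fun l _ => ?_
      rw [intervalIntegral.integral_const_mul]
      simp only [Polynomial.eval_mul, Polynomial.eval_C, Polynomial.eval_pow, Polynomial.eval_X]
      ring
    · intro l _
      exact (continuous_const.mul (Continuous.mul (by fun_prop) hfc)).intervalIntegrable _ _
  have hbdd : ∀ (g : ℝ → ℂ) (b : ℝ → ℝ), Continuous g → Continuous b → (∀ t, ‖g t‖ ≤ b t) →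
      ‖(c : ℂ)⁻¹ * ∫ t in -Real.pi..Real.pi, (vpKernel n t : ℂ) * g t‖ ≤
        c⁻¹ * ∫ t in -Real.pi..Real.pi, vpKernel n t * b t := by
    intro g b hgc hbc hgb
    rw [norm_mul, norm_inv, norm_real, Real.norm_of_nonneg hc0.le]
    gcongr
    refine intervalIntegral.norm_integral_le_of_norm_le (by linarith)
      (Eventually.of_forall fun t _ => ?_)
      (((continuous_vpKernel n).mul hbc).intervalIntegrable _ _)
    rw [norm_mul, norm_real, Real.norm_of_nonneg (vpKernel_nonneg n t)]
    exact mul_le_mul_of_nonneg_left (hgb t) (vpKernel_nonneg n t)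
  have hsub : ∀ g₁ g₂ : ℝ → ℂ, Continuous g₁ → Continuous g₂ →
      ∫ t in -Real.pi..Real.pi, (vpKernel n t : ℂ) * (g₁ t - g₂ t) =
        (∫ t in -Real.pi..Real.pi, (vpKernel n t : ℂ) * g₁ t) -
          ∫ t in -Real.pi..Real.pi, (vpKernel n t : ℂ) * g₂ t := by
    intro g₁ g₂ h₁ h₂
    simp only [mul_sub]
    exact intervalIntegral.integral_sub ((hkc.mul h₁).intervalIntegrable _ _)
      ((hkc.mul h₂).intervalIntegrable _ _)
  refine ⟨p, fun ζ hζ => ?_, fun ζ₁ h₁ ζ₂ h₂ => ?_⟩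
  · rw [hRp ζ hζ]
    have h1 : R ζ - f ζ = (c : ℂ)⁻¹ *
        ∫ t in -Real.pi..Real.pi, (vpKernel n t : ℂ) * (f (ζ * exp (-(t * I))) - f ζ) := by
      rw [hsub _ _ (hfc' ζ hζ) continuous_const, intervalIntegral.integral_mul_const,
        intervalIntegral.integral_ofReal, ← hc, mul_sub, ← mul_assoc, inv_mul_cancel₀
        (by exact_mod_cast hc0.ne'), one_mul]
    rw [h1]
    refine (hbdd _ (fun t => H * ‖exp (-(t * I)) - 1‖ ^ α) ((hfc' ζ hζ).sub continuous_const)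
      hg fun t => ?_).trans hn.le
    refine (hf _ (hmem' ζ hζ t) ζ hζ).trans (le_of_eq ?_)
    rw [← mul_sub_one, norm_mul, mem_sphere_zero_iff_norm.1 hζ, one_mul]
  · simp only [hRp ζ₁ h₁, hRp ζ₂ h₂]
    have h1 : R ζ₁ - R ζ₂ = (c : ℂ)⁻¹ * ∫ t in -Real.pi..Real.pi, (vpKernel n t : ℂ) *
        (f (ζ₁ * exp (-(t * I))) - f (ζ₂ * exp (-(t * I)))) := by
      rw [hsub _ _ (hfc' ζ₁ h₁) (hfc' ζ₂ h₂), mul_sub]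
    rw [h1]
    refine (hbdd _ (fun t => H * ‖ζ₁ - ζ₂‖ ^ α) ((hfc' ζ₁ h₁).sub (hfc' ζ₂ h₂))
      continuous_const fun t => ?_).trans (le_of_eq ?_)
    · refine (hf _ (hmem' ζ₁ h₁ t) _ (hmem' ζ₂ h₂ t)).trans (le_of_eq ?_)
      have := hmem' 1 (by simp) t
      rw [one_mul, mem_sphere_zero_iff_norm] at this
      rw [← sub_mul, norm_mul, this, mul_one]
    · rw [intervalIntegral.integral_mul_const, ← hc, ← mul_assoc, inv_mul_cancel₀ hc0.ne', one_mul]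

/-! ### Hölder algebra and the initial columns -/

lemma HolderCircle.mono {α K K' : ℝ} {f : ℂ → ℂ} (h : HolderCircle α K f) (hK : K ≤ K') :
    HolderCircle α K' f := fun ζ₁ h₁ ζ₂ h₂ =>
  (h ζ₁ h₁ ζ₂ h₂).trans (by gcongr)

/-- Hölder of exponent `α` on the unit circle, with an unspecified constant. -/
def IsHolder (α : ℝ) (f : ℂ → ℂ) : Prop := ∃ K, HolderCircle α K f

namespace IsHolder
variable {α : ℝ} {f g : ℂ → ℂ}

lemma nonneg (hf : IsHolder α f) : ∃ K, 0 ≤ K ∧ HolderCircle α K f := by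
  obtain ⟨K, hK⟩ := hf
  exact ⟨|K|, abs_nonneg _, hK.mono (le_abs_self _)⟩

lemma congr (hf : IsHolder α f) (h : ∀ ζ ∈ sphere (0 : ℂ) 1, g ζ = f ζ) : IsHolder α g := by
  obtain ⟨K, hK⟩ := hf
  refine ⟨K, fun ζ₁ h₁ ζ₂ h₂ => ?_⟩
  rw [h ζ₁ h₁, h ζ₂ h₂]
  exact hK ζ₁ h₁ ζ₂ h₂

lemma const (c : ℂ) : IsHolder α (fun _ => c) := ⟨0, fun _ _ _ _ => by simp⟩

lemma add (hf : IsHolder α f) (hg : IsHolder α g) : IsHolder α (fun z => f z + g z) := by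
  obtain ⟨K, hK⟩ := hf
  obtain ⟨L, hL⟩ := hg
  refine ⟨K + L, fun ζ₁ h₁ ζ₂ h₂ => ?_⟩
  rw [add_sub_add_comm, add_mul]
  exact (norm_add_le _ _).trans (add_le_add (hK ζ₁ h₁ ζ₂ h₂) (hL ζ₁ h₁ ζ₂ h₂))

lemma bounded (hα0 : 0 < α) (hf : IsHolder α f) :
    ∃ M, 0 ≤ M ∧ ∀ ζ ∈ sphere (0 : ℂ) 1, ‖f ζ‖ ≤ M := by
  obtain ⟨K, hK⟩ := hf
  obtain ⟨M, hM⟩ := (isCompact_sphere (0 : ℂ) 1).exists_bound_of_continuousOn (hK.continuousOn hα0)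
  exact ⟨M, (norm_nonneg _).trans (hM 1 (by simp)), hM⟩

lemma mul (hα0 : 0 < α) (hf : IsHolder α f) (hg : IsHolder α g) :
    IsHolder α (fun z => f z * g z) := by
  obtain ⟨K, hK0, hK⟩ := hf.nonneg
  obtain ⟨L, hL0, hL⟩ := hg.nonneg
  obtain ⟨M, hM0, hM⟩ := hf.bounded hα0
  obtain ⟨N, hN0, hN⟩ := hg.bounded hα0
  refine ⟨M * L + K * N, fun ζ₁ h₁ ζ₂ h₂ => ?_⟩
  have h : f ζ₁ * g ζ₁ - f ζ₂ * g ζ₂ = f ζ₁ * (g ζ₁ - g ζ₂) + (f ζ₁ - f ζ₂) * g ζ₂ := by ring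
  rw [h]
  refine (norm_add_le _ _).trans ?_
  rw [norm_mul, norm_mul]
  calc _ ≤ M * (L * ‖ζ₁ - ζ₂‖ ^ α) + K * ‖ζ₁ - ζ₂‖ ^ α * N := by
        gcongr
        · exact hM ζ₁ h₁
        · exact hL ζ₁ h₁ ζ₂ h₂
        · exact hK ζ₁ h₁ ζ₂ h₂
        · exact hN ζ₂ h₂
    _ = _ := by ring

lemma inv (hα0 : 0 < α) (hf : IsHolder α f) (h0 : ∀ ζ ∈ sphere (0 : ℂ) 1, f ζ ≠ 0) :
    IsHolder α (fun z => (f z)⁻¹) := by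
  obtain ⟨K, hK0, hK⟩ := hf.nonneg
  obtain ⟨M, hM⟩ := (isCompact_sphere (0 : ℂ) 1).exists_bound_of_continuousOn
    ((hK.continuousOn hα0).inv₀ h0)
  have hM0 : 0 ≤ M := (norm_nonneg _).trans (hM 1 (by simp))
  refine ⟨M * K * M, fun ζ₁ h₁ ζ₂ h₂ => ?_⟩
  have h : (f ζ₁)⁻¹ - (f ζ₂)⁻¹ = (f ζ₁)⁻¹ * (f ζ₂ - f ζ₁) * (f ζ₂)⁻¹ := by
    have := h0 ζ₁ h₁
    have := h0 ζ₂ h₂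
    field_simp
  rw [h, norm_mul, norm_mul]
  calc _ ≤ M * (K * ‖ζ₂ - ζ₁‖ ^ α) * M := by
        gcongr
        · exact hM ζ₁ h₁
        · exact hK ζ₂ h₂ ζ₁ h₁
        · exact hM ζ₂ h₂
    _ = _ := by rw [norm_sub_rev]; ring

lemma id (hα1 : α < 1) : IsHolder α (fun z => z) := by
  refine ⟨2 ^ (1 - α), fun ζ₁ h₁ ζ₂ h₂ => ?_⟩
  rcases eq_or_ne ζ₁ ζ₂ with rfl | hne
  · simp only [sub_self, norm_zero]; positivity
  rw [mem_sphere_zero_iff_norm] at h₁ h₂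
  have hpos : 0 < ‖ζ₁ - ζ₂‖ := norm_pos_iff.2 (sub_ne_zero.2 hne)
  have h2 : ‖ζ₁ - ζ₂‖ ≤ 2 := (norm_sub_le _ _).trans (by rw [h₁, h₂]; norm_num)
  calc ‖ζ₁ - ζ₂‖ = ‖ζ₁ - ζ₂‖ ^ (1 - α) * ‖ζ₁ - ζ₂‖ ^ α := by
        rw [← Real.rpow_add hpos]; simp
    _ ≤ _ := by
        gcongr

lemma sum {ι : Type*} (s : Finset ι) {F : ι → ℂ → ℂ} (h : ∀ i ∈ s, IsHolder α (F i)) :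
    IsHolder α (fun z => ∑ i ∈ s, F i z) := by
  classical
  induction s using Finset.induction_on with
  | empty => simpa using const (α := α) 0
  | insert a s ha ih =>
    simp only [Finset.sum_insert ha]
    exact (h a (Finset.mem_insert_self _ _)).add
      (ih fun i hi => h i (Finset.mem_insert_of_mem hi))

lemma prod (hα0 : 0 < α) {ι : Type*} (s : Finset ι) {F : ι → ℂ → ℂ}
    (h : ∀ i ∈ s, IsHolder α (F i)) : IsHolder α (fun z => ∏ i ∈ s, F i z) := by
  classical
  induction s using Finset.induction_on with
  | empty => simpa using const (α := α) 1
  | insert a s ha ih =>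
    simp only [Finset.prod_insert ha]
    exact (h a (Finset.mem_insert_self _ _)).mul hα0
      (ih fun i hi => h i (Finset.mem_insert_of_mem hi))

lemma det (hα0 : 0 < α) {m : ℕ} {X : ℂ → Matrix (Fin m) (Fin m) ℂ}
    (h : ∀ i j, IsHolder α (fun z => X z i j)) : IsHolder α (fun z => (X z).det) := by
  simp only [Matrix.det_apply']
  exact sum _ fun σ _ => (const _).mul hα0 (prod hα0 _ fun i _ => h _ _)

lemma matrix_inv (hα0 : 0 < α) {m : ℕ} {X : ℂ → Matrix (Fin m) (Fin m) ℂ}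
    (h : ∀ i j, IsHolder α (fun z => X z i j)) (h0 : ∀ ζ ∈ sphere (0 : ℂ) 1, (X ζ).det ≠ 0)
    (i j) : IsHolder α (fun z => (X z)⁻¹ i j) := by
  simp only [Matrix.inv_def, Matrix.smul_apply, Ring.inverse_eq_inv', smul_eq_mul,
    Matrix.adjugate_apply]
  refine ((det hα0 h).inv hα0 h0).mul hα0 (det hα0 fun k l => ?_)
  rcases eq_or_ne k j with rfl | hk
  · simpa using const _
  · simpa [Matrix.updateRow_ne hk] using h k l

lemma uniform (hα0 : 0 < α) {m : ℕ} {X : ℂ → Matrix (Fin m) (Fin m) ℂ}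
    (h : ∀ i j, IsHolder α (fun z => X z i j)) : ∃ H, 0 ≤ H ∧
      (∀ i j, HolderCircle α H (fun z => X z i j)) ∧
      ∀ ζ ∈ sphere (0 : ℂ) 1, ∀ i j, ‖X ζ i j‖ ≤ H := by
  choose K hK0 hK using fun i j => (h i j).nonneg
  choose M hM0 hM using fun i j => (h i j).bounded hα0
  have hle : ∀ i j, K i j + M i j ≤ ∑ i, ∑ j, (K i j + M i j) := fun i j =>
    (Finset.single_le_sum (f := fun j => K i j + M i j)
      (fun j _ => add_nonneg (hK0 i j) (hM0 i j)) (Finset.mem_univ j)).trans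
    (Finset.single_le_sum (f := fun i => ∑ j, (K i j + M i j))
      (fun i _ => Finset.sum_nonneg fun j _ => add_nonneg (hK0 i j) (hM0 i j)) (Finset.mem_univ i))
  refine ⟨∑ i, ∑ j, (K i j + M i j), ?_, fun i j => (hK i j).mono ?_, fun ζ hζ i j => ?_⟩
  · exact Finset.sum_nonneg fun i _ => Finset.sum_nonneg fun j _ => add_nonneg (hK0 i j) (hM0 i j)
  · linarith [hle i j, hM0 i j]
  · linarith [hle i j, hK0 i j, hM i j ζ hζ]

end IsHolder

namespace DiscClass
variable {α : ℝ} {f g : ℂ → ℂ}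

lemma const (c : ℂ) : DiscClass α (fun _ => c) :=
  ⟨continuousOn_const, differentiableOn_const _, IsHolder.const c⟩

lemma id (hα1 : α < 1) : DiscClass α (fun z => z) :=
  ⟨continuousOn_id, differentiableOn_id, IsHolder.id hα1⟩

lemma add (hf : DiscClass α f) (hg : DiscClass α g) : DiscClass α (fun z => f z + g z) :=
  ⟨hf.cont.add hg.cont, hf.diff.add hg.diff, IsHolder.add hf.hold hg.hold⟩

lemma mul (hα0 : 0 < α) (hf : DiscClass α f) (hg : DiscClass α g) :
    DiscClass α (fun z => f z * g z) :=
  ⟨hf.cont.mul hg.cont, hf.diff.mul hg.diff, IsHolder.mul hα0 hf.hold hg.hold⟩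

lemma inv (hα0 : 0 < α) (hf : DiscClass α f) (h0 : ∀ z ∈ closedBall (0 : ℂ) 1, f z ≠ 0) :
    DiscClass α (fun z => (f z)⁻¹) :=
  ⟨hf.cont.inv₀ h0, hf.diff.inv fun z hz => h0 z (ball_subset_closedBall hz),
    IsHolder.inv hα0 hf.hold fun z hz => h0 z (sphere_subset_closedBall hz)⟩

lemma sum {ι : Type*} (s : Finset ι) {F : ι → ℂ → ℂ} (h : ∀ i ∈ s, DiscClass α (F i)) :
    DiscClass α (fun z => ∑ i ∈ s, F i z) :=
  ⟨continuousOn_finsetSum _ fun i hi => (h i hi).cont,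
    DifferentiableOn.fun_sum fun i hi => (h i hi).diff, IsHolder.sum s fun i hi => (h i hi).hold⟩

lemma pow (hα0 : 0 < α) (hf : DiscClass α f) (n : ℕ) : DiscClass α (fun z => f z ^ n) := by
  induction n with
  | zero => simpa using const 1
  | succ n ih =>
    simp only [pow_succ]
    exact ih.mul hα0 hf

lemma polynomial (hα0 : 0 < α) (hα1 : α < 1) (p : Polynomial ℂ) :
    DiscClass α (fun z => p.eval z) := by
  simp only [Polynomial.eval_eq_sum_range]
  exact sum _ fun i _ => (const _).mul hα0 ((id hα1).pow hα0 i)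

end DiscClass

lemma continuousOn_det {m : ℕ} {X : ℂ → Matrix (Fin m) (Fin m) ℂ} {s : Set ℂ}
    (h : ∀ i j, ContinuousOn (fun z => X z i j) s) : ContinuousOn (fun z => (X z).det) s := by
  simp only [Matrix.det_apply']
  exact continuousOn_finsetSum _ fun σ _ => continuousOn_const.mul
    (continuousOn_finsetProd _ fun i _ => h _ _)

/-- The starting point of the reduction: the columns of `Θ` satisfy the boundary relation with a single
exponent `k`, and `det Θ` vanishes in the closed disc exactly on the finite multiset `L` of
points of the open disc. -/
lemma exists_initial {α : ℝ} (hα0 : 0 < α) (hα1 : α < 1) {m : ℕ}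
    (A : ℂ → Matrix (Fin m) (Fin m) ℂ) (hdet : ∀ ζ ∈ sphere (0 : ℂ) 1, (A ζ).det ≠ 0)
    (hA : ∀ i j, IsHolder α (fun z => A z i j)) :
    ∃ (Θ : ℂ → Matrix (Fin m) (Fin m) ℂ) (k : ℤ) (L : Multiset ℂ) (u : ℂ → ℂ),
      (∀ i j, DiscClass α (fun z => Θ z i j)) ∧
      (∀ ζ ∈ sphere (0 : ℂ) 1, A ζ * ((A ζ).map (starRingEnd ℂ))⁻¹ * (Θ ζ).map (starRingEnd ℂ) =
        ζ ^ k • Θ ζ) ∧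
      (∀ a ∈ L, ‖a‖ < 1) ∧ ContinuousOn u (closedBall 0 1) ∧
      (∀ z ∈ closedBall (0 : ℂ) 1, u z ≠ 0) ∧
      ∀ z ∈ closedBall (0 : ℂ) 1, (Θ z).det = (L.map fun a => z - a).prod * u z := by
  obtain ⟨H, hH0, hH, -⟩ := IsHolder.uniform hα0 hA
  obtain ⟨M, hM0, hMh, hMb⟩ := IsHolder.uniform hα0 (IsHolder.matrix_inv hα0 hA hdet)
  obtain ⟨δ, hδ, hnear⟩ := exists_near_identity hα0 hα1 m
    (K := m * (M * (2 * H) + M * 1)) (by positivity)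
  set δ' : ℝ := min 1 (δ / (m * M + 1)) with hδ'
  have hδ'0 : 0 < δ' := by positivity
  obtain ⟨n, hn⟩ := exists_trig_approx (H := H) hα0 hδ'0
  choose p hp1 hp2 using fun i j => hn (fun z => A z i j) (hH i j)
  set P : Matrix (Fin m) (Fin m) (Polynomial ℂ) := Matrix.of p with hP
  set Pz : ℂ → Matrix (Fin m) (Fin m) ℂ := fun z => P.map (Polynomial.eval z) with hPz
  set R : ℂ → Matrix (Fin m) (Fin m) ℂ := fun z => (z ^ n)⁻¹ • Pz z with hR
  set E : ℂ → Matrix (Fin m) (Fin m) ℂ := fun z => (A z)⁻¹ * (R z - A z) with hE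
  have hRe : ∀ z i j, R z i j = (z ^ n)⁻¹ * (p i j).eval z := fun z i j => rfl
  have hRb : ∀ ζ ∈ sphere (0 : ℂ) 1, ∀ i j, ‖(R ζ - A ζ) i j‖ ≤ δ' := fun ζ hζ i j =>
    hp1 i j ζ hζ
  have hRh : ∀ i j, HolderCircle α (2 * H) (fun z => (R z - A z) i j) := by
    intro i j ζ₁ h₁ ζ₂ h₂
    simp only [Matrix.sub_apply, hRe]
    rw [sub_sub_sub_comm, two_mul, add_mul]
    exact (norm_sub_le _ _).trans (add_le_add (hp2 i j ζ₁ h₁ ζ₂ h₂) (hH i j ζ₁ h₁ ζ₂ h₂))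
  obtain ⟨hdetE, Ψ, hΨ, hΨdet, hreal⟩ := hnear E
    (fun ζ hζ i j => by
      refine (mul_entry_norm_le hM0 (hMb ζ hζ) (hRb ζ hζ) i j).trans ?_
      have h1 : δ' ≤ δ / (m * M + 1) := min_le_right _ _
      rw [le_div_iff₀ (by positivity)] at h1
      nlinarith)
    (fun i j => by
      refine (mul_entry_holder hM0 hMb hRb hMh hRh hM0 i j).mono ?_
      gcongr
      exact min_le_left _ _)
  have hAu : ∀ ζ ∈ sphere (0 : ℂ) 1, A ζ * (A ζ)⁻¹ = 1 := fun ζ hζ =>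
    Matrix.mul_nonsing_inv _ (isUnit_iff_ne_zero.2 (hdet ζ hζ))
  have hAu' : ∀ ζ ∈ sphere (0 : ℂ) 1, (A ζ)⁻¹ * A ζ = 1 := fun ζ hζ =>
    Matrix.nonsing_inv_mul _ (isUnit_iff_ne_zero.2 (hdet ζ hζ))
  have h1E : ∀ ζ ∈ sphere (0 : ℂ) 1, 1 + E ζ = (A ζ)⁻¹ * R ζ := by
    intro ζ hζ
    simp only [hE]
    rw [mul_sub, hAu' ζ hζ]
    abel
  set Q : Polynomial ℂ := P.det with hQ
  have hQe : ∀ z, Q.eval z = (Pz z).det := fun z => by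
    rw [hQ, ← Polynomial.coe_evalRingHom, RingHom.map_det]; rfl
  have hQ0 : ∀ ζ ∈ sphere (0 : ℂ) 1, Q.eval ζ ≠ 0 := by
    intro ζ hζ h0
    apply hdetE ζ hζ
    rw [h1E ζ hζ, Matrix.det_mul]
    simp only [hR]
    rw [Matrix.det_smul, ← hQe, h0, mul_zero, mul_zero]
  have hQne : Q ≠ 0 := by
    intro h
    exact hQ0 1 (by simp) (by rw [h, Polynomial.eval_zero])
  have hQf : ∀ z, Q.eval z = Q.leadingCoeff * (Q.roots.map fun a => z - a).prod := by
    intro z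
    conv_lhs => rw [(IsAlgClosed.splits Q).eq_prod_roots]
    rw [Polynomial.eval_mul, Polynomial.eval_C, Polynomial.eval_multiset_prod, Multiset.map_map]
    simp
  refine ⟨fun z => Pz z * Ψ z, -(2 * n : ℤ), Q.roots.filter (fun a => ‖a‖ < 1),
    fun z => Q.leadingCoeff * ((Q.roots.filter (fun a => ¬ ‖a‖ < 1)).map fun a => z - a).prod *
      (Ψ z).det, ?_, ?_, ?_, ?_, ?_, ?_⟩
  · intro i j
    simp only [Matrix.mul_apply]
    exact DiscClass.sum _ fun k _ => (DiscClass.polynomial hα0 hα1 _).mul hα0 (hΨ k j)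
  · intro ζ hζ
    have hζ0 : ζ ≠ 0 := by rintro rfl; simp at hζ
    have hcc : starRingEnd ℂ ζ = ζ⁻¹ := by
      rw [inv_def, normSq_eq_norm_sq, mem_sphere_zero_iff_norm.1 hζ]; simp
    set S := (A ζ)⁻¹ * R ζ * Ψ ζ with hS
    have hSr : S.map (starRingEnd ℂ) = S := by
      ext i j
      rw [Matrix.map_apply, conj_eq_iff_im, hS, ← h1E ζ hζ]
      exact hreal ζ hζ i j
    have hRS : Pz ζ * Ψ ζ = ζ ^ n • (A ζ * S) := by
      rw [hS, ← mul_assoc, ← mul_assoc, hAu ζ hζ, one_mul]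
      simp only [hR]
      rw [smul_mul_assoc, smul_smul, mul_inv_cancel₀ (pow_ne_zero _ hζ0), one_smul]
    have hcA : ((A ζ).map (starRingEnd ℂ))⁻¹ * (A ζ).map (starRingEnd ℂ) = 1 := by
      refine Matrix.nonsing_inv_mul _ (isUnit_iff_ne_zero.2 ?_)
      have := RingHom.map_det (starRingEnd ℂ) (A ζ)
      rw [RingHom.mapMatrix_apply] at this
      rw [← this]
      exact (map_ne_zero _).2 (hdet ζ hζ)
    have hcon : (ζ ^ n • (A ζ * S)).map (starRingEnd ℂ) =
        (ζ ^ n)⁻¹ • ((A ζ).map (starRingEnd ℂ) * S) := by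
      rw [Matrix.map_smul' _ _ _ (map_mul (starRingEnd ℂ)), Matrix.map_mul, hSr, map_pow, hcc,
        inv_pow]
    beta_reduce
    rw [hRS, hcon, mul_smul_comm, mul_assoc, ← mul_assoc _ _ S, hcA, one_mul, smul_smul]
    congr 1
    rw [zpow_neg, two_mul, zpow_add₀ hζ0, zpow_natCast]
    field_simp
  · intro a ha
    exact (Multiset.mem_filter.1 ha).2
  · refine ContinuousOn.mul (continuousOn_const.mul (Continuous.continuousOn ?_))
      (continuousOn_det fun i j => (hΨ i j).cont)
    exact continuous_multiset_prod _ fun a _ => by fun_prop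
  · intro z hz
    refine mul_ne_zero (mul_ne_zero (Polynomial.leadingCoeff_ne_zero.2 hQne) ?_) (hΨdet z hz)
    rw [Ne, Multiset.prod_eq_zero_iff, Multiset.mem_map]
    rintro ⟨a, ha, hza⟩
    obtain ⟨ha1, ha2⟩ := Multiset.mem_filter.1 ha
    rw [← sub_eq_zero.1 hza] at ha1 ha2
    refine hQ0 z ?_ (Polynomial.isRoot_of_mem_roots ha1)
    rw [mem_sphere_zero_iff_norm]
    exact le_antisymm (mem_closedBall_zero_iff.1 hz) (not_lt.1 ha2)
  · intro z hz
    rw [Matrix.det_mul, ← hQe, hQf]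
    have := Multiset.filter_add_not (fun a : ℂ => ‖a‖ < 1) Q.roots
    conv_lhs => rw [← this]
    rw [Multiset.map_add, Multiset.prod_add]
    ring

/-! ### Good columns and multipliers -/

lemma conj_eq_inv_of_mem_sphere {ζ : ℂ} (hζ : ζ ∈ sphere (0 : ℂ) 1) :
    starRingEnd ℂ ζ = ζ⁻¹ := by
  rw [inv_def, normSq_eq_norm_sq, mem_sphere_zero_iff_norm.1 hζ]; simp

lemma circle_ne_zero {ζ : ℂ} (hζ : ζ ∈ sphere (0 : ℂ) 1) : ζ ≠ 0 := by
  rintro rfl; simp at hζ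

lemma one_sub_conj_mul_ne_zero {a : ℂ} (ha : ‖a‖ < 1) {z : ℂ} (hz : z ∈ closedBall (0 : ℂ) 1) :
    1 - starRingEnd ℂ a * z ≠ 0 := by
  intro h
  have h1 : starRingEnd ℂ a * z = 1 := (sub_eq_zero.1 h).symm
  have h2 : ‖a‖ * ‖z‖ = 1 := by rw [← RCLike.norm_conj a, ← norm_mul, h1, norm_one]
  have h3 := mem_closedBall_zero_iff.1 hz
  nlinarith [norm_nonneg a, norm_nonneg z]

/-- Vector functions `f` in the disc class with `B · conj f = ζ ^ k · f` on the circle. -/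
structure GoodCol (α : ℝ) {m : ℕ} (B : ℂ → Matrix (Fin m) (Fin m) ℂ) (k : ℤ)
    (f : Fin m → ℂ → ℂ) : Prop where
  disc : ∀ i, DiscClass α (f i)
  rel : ∀ ζ ∈ sphere (0 : ℂ) 1, ∀ i,
    ∑ l, B ζ i l * starRingEnd ℂ (f l ζ) = ζ ^ k * f i ζ

/-- Combinations of good columns with multipliers adapted to the exponents are good. -/
lemma GoodCol.comb {α : ℝ} (hα0 : 0 < α) {m : ℕ} {B : ℂ → Matrix (Fin m) (Fin m) ℂ}
    {κ : Fin m → ℤ} {k : ℤ} {Θ : ℂ → Matrix (Fin m) (Fin m) ℂ} {p : Fin m → ℂ → ℂ}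
    (hΘ : ∀ j, GoodCol α B (κ j) (fun i z => Θ z i j)) (hp : ∀ j, DiscClass α (p j))
    (hpr : ∀ j, ∀ ζ ∈ sphere (0 : ℂ) 1, starRingEnd ℂ (p j ζ) * ζ ^ κ j = ζ ^ k * p j ζ) :
    GoodCol α B k (fun i z => ∑ j, p j z * Θ z i j) := by
  refine ⟨fun i => DiscClass.sum _ fun j _ => (hp j).mul hα0 ((hΘ j).disc i), fun ζ hζ i => ?_⟩
  simp only [map_sum, map_mul, Finset.mul_sum]
  rw [Finset.sum_comm]
  refine Finset.sum_congr rfl fun j _ => ?_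
  have h1 := (hΘ j).rel ζ hζ i
  have h2 := hpr j ζ hζ
  calc _ = starRingEnd ℂ (p j ζ) * ∑ l, B ζ i l * starRingEnd ℂ (Θ ζ l j) := by
        rw [Finset.mul_sum]
        exact Finset.sum_congr rfl fun l _ => by ring
    _ = _ := by rw [h1]; linear_combination Θ ζ i j * h2

/-- A column vanishing at `a` may be divided by `(z - a) (1 - conj a z)`; this raises the exponent
by two. -/
lemma GoodCol.divide {α : ℝ} (hα0 : 0 < α) (hα1 : α < 1) {m : ℕ}
    {B : ℂ → Matrix (Fin m) (Fin m) ℂ} {k : ℤ} {f : Fin m → ℂ → ℂ} (hf : GoodCol α B k f) {a : ℂ}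
    (ha : ‖a‖ < 1) (h0 : ∀ i, f i a = 0) :
    ∃ g : Fin m → ℂ → ℂ, GoodCol α B (k + 2) g ∧ ∀ i z, z ∈ closedBall (0 : ℂ) 1 →
      (z - a) * (1 - starRingEnd ℂ a * z) * g i z = f i z := by
  have hab : a ∈ ball (0 : ℂ) 1 := by simpa using ha
  have hne : ∀ z ∈ sphere (0 : ℂ) 1, z - a ≠ 0 := by
    intro z hz h
    rw [mem_sphere_zero_iff_norm, sub_eq_zero.1 h] at hz
    linarith
  have hds : ∀ i, DiscClass α (dslope (f i) a) := by
    intro i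
    have hd : DifferentiableAt ℂ (f i) a :=
      ((hf.disc i).diff).differentiableAt (isOpen_ball.mem_nhds hab)
    refine ⟨(continuousOn_dslope (mem_of_superset (isOpen_ball.mem_nhds hab)
      ball_subset_closedBall)).2 ⟨(hf.disc i).cont, hd⟩,
      (differentiableOn_dslope (isOpen_ball.mem_nhds hab)).2 (hf.disc i).diff, ?_⟩
    refine IsHolder.congr (IsHolder.mul hα0 (IsHolder.inv hα0
      ((IsHolder.id hα1).add (IsHolder.const (-a))) ?_) (hf.disc i).hold) ?_
    · intro z hz
      rw [← sub_eq_add_neg]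
      exact hne z hz
    · intro z hz
      rw [dslope_of_ne _ (sub_ne_zero.1 (hne z hz)), slope_def_field, h0, sub_zero,
        ← sub_eq_add_neg, div_eq_inv_mul]
  have hq : ∀ z ∈ closedBall (0 : ℂ) 1, 1 + -starRingEnd ℂ a * z ≠ 0 := fun z hz => by
    rw [neg_mul, ← sub_eq_add_neg]
    exact one_sub_conj_mul_ne_zero ha hz
  have hfac : ∀ i z, z ∈ closedBall (0 : ℂ) 1 →
      (z - a) * (1 - starRingEnd ℂ a * z) * (dslope (f i) a z * (1 + -starRingEnd ℂ a * z)⁻¹) =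
        f i z := by
    intro i z hz
    have h1 := sub_smul_dslope (f i) a z
    rw [h0, sub_zero, smul_eq_mul] at h1
    have h2 := hq z hz
    have h3 : 1 - starRingEnd ℂ a * z = 1 + -starRingEnd ℂ a * z := by ring
    rw [h3, mul_assoc, mul_left_comm _ (dslope (f i) a z), mul_inv_cancel₀ h2, mul_one, h1]
  refine ⟨fun i z => dslope (f i) a z * (1 + -starRingEnd ℂ a * z)⁻¹, ⟨fun i =>
    (hds i).mul hα0 (DiscClass.inv hα0 ((DiscClass.const 1).add
      ((DiscClass.const _).mul hα0 (DiscClass.id hα1))) hq), fun ζ hζ i => ?_⟩, hfac⟩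
  have hζ0 := circle_ne_zero hζ
  have hcl := sphere_subset_closedBall hζ
  have hcc := conj_eq_inv_of_mem_sphere hζ
  set q := (ζ - a) * (1 - starRingEnd ℂ a * ζ) with hqd
  have hq0 : q ≠ 0 := mul_ne_zero (hne ζ hζ) (one_sub_conj_mul_ne_zero ha hcl)
  have hqc : starRingEnd ℂ q * ζ ^ 2 = q := by
    rw [hqd]
    simp only [map_mul, map_sub, map_one, conj_conj, hcc]
    field_simp
  have hqc0 : starRingEnd ℂ q ≠ 0 := (map_ne_zero _).2 hq0
  have hg : ∀ l, dslope (f l) a ζ * (1 + -starRingEnd ℂ a * ζ)⁻¹ = q⁻¹ * f l ζ := by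
    intro l
    rw [← hfac l ζ hcl, inv_mul_cancel_left₀ hq0]
  simp only [hg, map_mul, map_inv₀]
  calc _ = (starRingEnd ℂ q)⁻¹ * ∑ l, B ζ i l * starRingEnd ℂ (f l ζ) := by
        rw [Finset.mul_sum]
        exact Finset.sum_congr rfl fun l _ => by ring
    _ = _ := by
        rw [hf.rel ζ hζ i, zpow_add₀ hζ0]
        have : (starRingEnd ℂ q)⁻¹ = ζ ^ 2 * q⁻¹ := by
          rw [← div_eq_mul_inv, eq_div_iff hq0, inv_mul_eq_iff_eq_mul₀ hqc0, hqc]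
        rw [this]
        have : ζ ^ (2 : ℤ) = ζ ^ 2 := by norm_cast
        rw [this]
        ring

/-- Self-reciprocal interpolation: a multiplier from exponent `κ` to exponent `k` with
prescribed value `μ` at `a`. -/
lemma exists_multiplier {α : ℝ} (hα0 : 0 < α) (hα1 : α < 1) {a : ℂ} (ha : ‖a‖ < 1) (κ k : ℤ)
    (μ : ℂ) (h : μ = 0 ∨ k < κ ∨ (κ = k ∧ starRingEnd ℂ μ = μ)) :
    ∃ p : ℂ → ℂ, DiscClass α p ∧ p a = μ ∧
      (∀ ζ ∈ sphere (0 : ℂ) 1, starRingEnd ℂ (p ζ) * ζ ^ κ = ζ ^ k * p ζ) ∧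
      (κ = k → ∀ z, p z = μ) ∧
      (κ = k + 1 → ∀ z, (1 - a * starRingEnd ℂ a) * p z =
        (μ - starRingEnd ℂ μ * a) + (starRingEnd ℂ μ - μ * starRingEnd ℂ a) * z) := by
  rcases h with rfl | h | ⟨rfl, h⟩
  · exact ⟨fun _ => 0, DiscClass.const 0, rfl, by simp, by simp, by simp⟩
  · obtain ⟨e, rfl⟩ : ∃ e : ℕ, κ = k + e := ⟨(κ - k).toNat, by omega⟩
    have he : e ≠ 0 := by omega
    have hD : 1 - a ^ e * starRingEnd ℂ a ^ e ≠ 0 := by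
      intro h
      have h1 : a ^ e * starRingEnd ℂ a ^ e = 1 := (sub_eq_zero.1 h).symm
      have h2 : ‖a‖ ^ e * ‖a‖ ^ e = 1 := by
        rw [← norm_one (α := ℂ), ← h1, norm_mul, norm_pow, norm_pow, RCLike.norm_conj]
      have h3 := pow_lt_one₀ (norm_nonneg a) ha he
      nlinarith [pow_nonneg (norm_nonneg a) e]
    set D := 1 - a ^ e * starRingEnd ℂ a ^ e with hDd
    have hDc : starRingEnd ℂ D = D := by
      rw [hDd]; simp only [map_sub, map_one, map_mul, map_pow, conj_conj]; ring
    refine ⟨fun z => D⁻¹ * (μ - starRingEnd ℂ μ * a ^ e) +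
      D⁻¹ * (starRingEnd ℂ μ - μ * starRingEnd ℂ a ^ e) * z ^ e,
      (DiscClass.const _).add ((DiscClass.const _).mul hα0 ((DiscClass.id hα1).pow hα0 e)),
      ?_, ?_, ?_, ?_⟩
    · field_simp
      rw [hDd]; ring
    · intro ζ hζ
      have hζ0 := circle_ne_zero hζ
      rw [zpow_add₀ hζ0, zpow_natCast]
      simp only [map_add, map_mul, map_inv₀, map_sub, map_pow, conj_conj, hDc,
        conj_eq_inv_of_mem_sphere hζ]
      have hz : ζ ^ e * ζ⁻¹ ^ e = 1 := by rw [← mul_pow, mul_inv_cancel₀ hζ0, one_pow]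
      linear_combination ζ ^ k * D⁻¹ * (μ - starRingEnd ℂ μ * a ^ e) * hz
    · intro h; omega
    · intro h z
      obtain rfl : e = 1 := by omega
      simp only [pow_one] at hDd ⊢
      rw [← hDd]
      field_simp
  · refine ⟨fun _ => μ, DiscClass.const μ, rfl, fun ζ _ => by rw [h, mul_comm], fun _ _ => rfl, ?_⟩
    intro h; omega

/-- Replacing the columns `i`, `j` of `Θ` by `Θ p` and `Θ q` multiplies the determinant by a
`2 × 2` minor; this is the matrix determinant lemma for a rank-two perturbation. -/
lemma det_updateCol_two {m : ℕ} (Θ : Matrix (Fin m) (Fin m) ℂ) {i j : Fin m} (hij : i ≠ j)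
    (p q : Fin m → ℂ) :
    ((Θ.updateCol i (Θ.mulVec p)).updateCol j (Θ.mulVec q)).det =
      (p i * q j - q i * p j) * Θ.det := by
  set U : Matrix (Fin m) (Fin 2) ℂ :=
    Matrix.of fun l t => ![p l - (1 : Matrix (Fin m) (Fin m) ℂ) l i,
      q l - (1 : Matrix (Fin m) (Fin m) ℂ) l j] t with hU
  set V : Matrix (Fin 2) (Fin m) ℂ :=
    Matrix.of fun t l => ![(1 : Matrix (Fin m) (Fin m) ℂ) i l,
      (1 : Matrix (Fin m) (Fin m) ℂ) j l] t with hV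
  have h : (Θ.updateCol i (Θ.mulVec p)).updateCol j (Θ.mulVec q) = Θ * (1 + U * V) := by
    ext r s
    rw [mul_add, mul_one, ← Matrix.mul_assoc, Matrix.add_apply, Matrix.mul_apply, Fin.sum_univ_two]
    have hu0 : (Θ * U) r 0 = Θ.mulVec p r - Θ r i := by
      simp [hU, Matrix.mul_apply, mul_sub, Finset.sum_sub_distrib, Matrix.mulVec, dotProduct,
        Matrix.one_apply]
    have hu1 : (Θ * U) r 1 = Θ.mulVec q r - Θ r j := by
      simp [hU, Matrix.mul_apply, mul_sub, Finset.sum_sub_distrib, Matrix.mulVec, dotProduct,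
        Matrix.one_apply]
    rw [hu0, hu1]
    simp only [hV, Matrix.of_apply, Matrix.cons_val_zero, Matrix.cons_val_one]
    rcases eq_or_ne s j with rfl | hsj
    · simp [hij]
    · rw [Matrix.updateCol_ne hsj]
      rcases eq_or_ne s i with rfl | hsi
      · simp [hsj.symm]
      · rw [Matrix.updateCol_ne hsi]
        simp [hsj.symm, hsi.symm]
  rw [h, Matrix.det_mul, Matrix.det_one_add_mul_comm, Matrix.det_fin_two]
  simp [hU, hV, Matrix.add_apply, Matrix.mul_apply, Matrix.one_apply, hij, hij.symm]
  ring

/-! ### Removal of the zeros of the determinant -/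

lemma GoodCol.update {α : ℝ} {m : ℕ} {B Θ : ℂ → Matrix (Fin m) (Fin m) ℂ} {κ : Fin m → ℤ}
    (hΘ : ∀ j, GoodCol α B (κ j) (fun i z => Θ z i j)) (j₀ : Fin m) {k : ℤ} {g : Fin m → ℂ → ℂ}
    (hg : GoodCol α B k g) (j : Fin m) :
    GoodCol α B (Function.update κ j₀ k j)
      (fun i z => (Θ z).updateCol j₀ (fun i => g i z) i j) := by
  rcases eq_or_ne j j₀ with rfl | hj
  · simpa using hg
  · simpa [Matrix.updateCol_ne hj, Function.update_of_ne hj] using hΘ j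

/-- Case where a real combination of the columns of least exponent, corrected by the others,
vanishes at `a`: one column is replaced. -/
lemma step_real {α : ℝ} (hα0 : 0 < α) (hα1 : α < 1) {m : ℕ}
    {B Θ : ℂ → Matrix (Fin m) (Fin m) ℂ} {κ : Fin m → ℤ}
    (hΘ : ∀ j, GoodCol α B (κ j) (fun i z => Θ z i j)) {a : ℂ} (ha : ‖a‖ < 1) {c : Fin m → ℂ}
    (hc : (Θ a).mulVec c = 0) {j₀ : Fin m} (hc1 : c j₀ = 1) (hmin : ∀ j, c j ≠ 0 → κ j₀ ≤ κ j)
    (hreal : ∀ j, κ j = κ j₀ → starRingEnd ℂ (c j) = c j) :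
    ∃ (Θ' : ℂ → Matrix (Fin m) (Fin m) ℂ) (κ' : Fin m → ℤ),
      (∀ j, GoodCol α B (κ' j) (fun i z => Θ' z i j)) ∧
      ∀ z ∈ closedBall (0 : ℂ) 1,
        (z - a) * (1 - starRingEnd ℂ a * z) * (Θ' z).det = (Θ z).det := by
  choose p hp hpa hpr hpc _ using fun j => exists_multiplier hα0 hα1 ha (κ j) (κ j₀) (c j) (by
    by_cases h0 : c j = 0
    · exact Or.inl h0
    rcases (hmin j h0).lt_or_eq with h | h
    · exact Or.inr (Or.inl h)
    · exact Or.inr (Or.inr ⟨h.symm, hreal j h.symm⟩))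
  have hf := GoodCol.comb hα0 hΘ hp hpr
  obtain ⟨g, hg, hgf⟩ := hf.divide hα0 hα1 ha (fun i => by
    simp only [hpa]
    have := congrFun hc i
    simp only [Matrix.mulVec, dotProduct, Pi.zero_apply] at this
    rw [← this]
    exact Finset.sum_congr rfl fun j _ => mul_comm _ _)
  refine ⟨fun z => (Θ z).updateCol j₀ (fun i => g i z), _, GoodCol.update hΘ j₀ hg,
    fun z hz => ?_⟩
  rw [← Matrix.det_updateCol_smul]
  have : ((z - a) * (1 - starRingEnd ℂ a * z)) • (fun i => g i z) =
      fun i => ∑ j, p j z • Θ z i j := by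
    ext i
    exact hgf i z hz
  rw [this, Matrix.det_updateCol_sum, hpc j₀ rfl, hc1, one_smul]

/-- Case where the null vector cannot be made real on the columns of least exponent: two columns
of that exponent are replaced, using the two multiples `c` and `I c` of the null vector. The
relevant `2 × 2` minor of multipliers is a nonzero constant times `(z - a) (1 - conj a z)`. -/
lemma step_complex {α : ℝ} (hα0 : 0 < α) (hα1 : α < 1) {m : ℕ}
    {B Θ : ℂ → Matrix (Fin m) (Fin m) ℂ} {κ : Fin m → ℤ}
    (hΘ : ∀ j, GoodCol α B (κ j) (fun i z => Θ z i j)) {a : ℂ} (ha : ‖a‖ < 1) {c : Fin m → ℂ}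
    (hc : (Θ a).mulVec c = 0) {j₀ j₁ : Fin m} (hc1 : c j₀ = 1)
    (hmin : ∀ j, c j ≠ 0 → κ j₀ ≤ κ j) (hκ : κ j₁ = κ j₀)
    (him : starRingEnd ℂ (c j₁) ≠ c j₁) :
    ∃ (Θ' : ℂ → Matrix (Fin m) (Fin m) ℂ) (κ' : Fin m → ℤ),
      (∀ j, GoodCol α B (κ' j) (fun i z => Θ' z i j)) ∧ ∃ C : ℂ, C ≠ 0 ∧
      ∀ z ∈ closedBall (0 : ℂ) 1, z ≠ a →
        (z - a) * (1 - starRingEnd ℂ a * z) * (Θ' z).det = C * (Θ z).det := by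
  have hj : j₀ ≠ j₁ := by
    rintro rfl
    rw [hc1] at him
    simp at him
  have hlt : ∀ (w : ℂ) j, w * c j = 0 ∨ κ j₀ - 1 < κ j ∨
      (κ j = κ j₀ - 1 ∧ starRingEnd ℂ (w * c j) = w * c j) := by
    intro w j
    by_cases h0 : c j = 0
    · exact Or.inl (by rw [h0, mul_zero])
    · exact Or.inr (Or.inl (by have := hmin j h0; omega))
  have hzero : ∀ w : ℂ, ∀ i, ∑ j, w * c j * Θ a i j = 0 := by
    intro w i
    have := congrFun hc i
    simp only [Matrix.mulVec, dotProduct, Pi.zero_apply] at this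
    calc _ = w * ∑ j, Θ a i j * c j := by
          rw [Finset.mul_sum]
          exact Finset.sum_congr rfl fun j _ => by ring
      _ = 0 := by rw [this, mul_zero]
  choose p hp hpa hpr _ hpc using fun j =>
    exists_multiplier hα0 hα1 ha (κ j) (κ j₀ - 1) (1 * c j) (hlt 1 j)
  choose r hr hra hrr _ hrc using fun j =>
    exists_multiplier hα0 hα1 ha (κ j) (κ j₀ - 1) (I * c j) (hlt I j)
  obtain ⟨g, hg, hgf⟩ := (GoodCol.comb hα0 hΘ hp hpr).divide hα0 hα1 ha (fun i => by
    simp only [hpa]; exact hzero 1 i)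
  obtain ⟨h, hh, hhf⟩ := (GoodCol.comb hα0 hΘ hr hrr).divide hα0 hα1 ha (fun i => by
    simp only [hra]; exact hzero I i)
  have hD : 1 - a * starRingEnd ℂ a ≠ 0 := by
    rw [mul_comm]
    exact one_sub_conj_mul_ne_zero ha (by simpa using ha.le)
  refine ⟨fun z => ((Θ z).updateCol j₀ (fun i => g i z)).updateCol j₁ (fun i => h i z), _,
    GoodCol.update (GoodCol.update hΘ j₀ hg) j₁ hh,
    2 * I * (c j₁ - starRingEnd ℂ (c j₁)) / (1 - a * starRingEnd ℂ a) ^ 2, ?_, fun z hz hza => ?_⟩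
  · refine div_ne_zero (mul_ne_zero (mul_ne_zero two_ne_zero I_ne_zero) ?_) (pow_ne_zero _ hD)
    exact sub_ne_zero.2 him.symm
  set q := (z - a) * (1 - starRingEnd ℂ a * z) with hq
  have hq0 : q ≠ 0 := mul_ne_zero (sub_ne_zero.2 hza) (one_sub_conj_mul_ne_zero ha hz)
  have e1 : q • (fun i => g i z) = (Θ z).mulVec (fun j => p j z) := by
    ext i
    rw [Pi.smul_apply, smul_eq_mul, hgf i z hz]
    exact Finset.sum_congr rfl fun j _ => mul_comm _ _
  have e2 : q • (fun i => h i z) = (Θ z).mulVec (fun j => r j z) := by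
    ext i
    rw [Pi.smul_apply, smul_eq_mul, hhf i z hz]
    exact Finset.sum_congr rfl fun j _ => mul_comm _ _
  have e3 := det_updateCol_two (Θ z) hj (fun j => p j z) (fun j => r j z)
  rw [← e1, ← e2, Matrix.det_updateCol_smul, Matrix.updateCol_comm _ hj,
    Matrix.det_updateCol_smul, Matrix.updateCol_comm _ hj.symm] at e3
  have p0 := hpc j₀ (by ring) z
  have p1 := hpc j₁ (by rw [hκ]; ring) z
  have r0 := hrc j₀ (by ring) z
  have r1 := hrc j₁ (by rw [hκ]; ring) z
  simp only [hc1, map_mul, map_one, conj_I, one_mul, mul_one] at p0 p1 r0 r1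
  have e4 : (1 - a * starRingEnd ℂ a) ^ 2 * (p j₀ z * r j₁ z - r j₀ z * p j₁ z) =
      2 * I * (c j₁ - starRingEnd ℂ (c j₁)) * q := by
    calc _ = (1 - a * starRingEnd ℂ a) * p j₀ z * ((1 - a * starRingEnd ℂ a) * r j₁ z) -
          (1 - a * starRingEnd ℂ a) * r j₀ z * ((1 - a * starRingEnd ℂ a) * p j₁ z) := by ring
      _ = _ := by rw [p0, p1, r0, r1, hq]; ring
  rw [div_mul_eq_mul_div, eq_div_iff (pow_ne_zero _ hD)]
  refine mul_left_cancel₀ hq0 ?_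
  beta_reduce
  linear_combination (1 - a * starRingEnd ℂ a) ^ 2 * e3 + (Θ z).det * e4

/-- Partial factorization: the columns of `Θ` satisfy the boundary relation, and the zeros of
`det Θ` on the closed disc are listed, with multiplicity, by `L`. -/
structure PartialFact (α : ℝ) {m : ℕ} (B Θ : ℂ → Matrix (Fin m) (Fin m) ℂ) (κ : Fin m → ℤ)
    (L : Multiset ℂ) : Prop where
  cols : ∀ j, GoodCol α B (κ j) (fun i z => Θ z i j)
  det : ∃ u : ℂ → ℂ, ContinuousOn u (closedBall 0 1) ∧ (∀ z ∈ closedBall (0 : ℂ) 1, u z ≠ 0) ∧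
    ∀ z ∈ closedBall (0 : ℂ) 1, (Θ z).det = (L.map fun a => z - a).prod * u z

/-- One zero of the determinant is removed; the zero is `a`, a distinguished element of the multiset. -/
lemma PartialFact.step {α : ℝ} (hα0 : 0 < α) (hα1 : α < 1) {m : ℕ}
    {B Θ : ℂ → Matrix (Fin m) (Fin m) ℂ} {κ : Fin m → ℤ} {a : ℂ} {L : Multiset ℂ}
    (h : PartialFact α B Θ κ (a ::ₘ L)) (ha : ‖a‖ < 1) :
    ∃ Θ' κ', PartialFact α B Θ' κ' L := by
  obtain ⟨hΘ, u, huc, hu0, hu⟩ := h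
  have hab : a ∈ ball (0 : ℂ) 1 := by simpa using ha
  have hdet : (Θ a).det = 0 := by
    rw [hu a (ball_subset_closedBall hab)]; simp
  obtain ⟨b, hb0, hb⟩ := Matrix.exists_mulVec_eq_zero_iff.2 hdet
  obtain ⟨j₀, hj₀, hmin⟩ := Finset.exists_min_image (Finset.univ.filter fun j => b j ≠ 0) κ (by
    obtain ⟨j, hj⟩ := Function.ne_iff.1 hb0
    exact ⟨j, by simpa using hj⟩)
  have hbj : b j₀ ≠ 0 := by simpa using hj₀
  set c : Fin m → ℂ := (b j₀)⁻¹ • b with hcd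
  have hc : (Θ a).mulVec c = 0 := by rw [hcd, Matrix.mulVec_smul, hb, smul_zero]
  have hc1 : c j₀ = 1 := by simp [hcd, hbj]
  have hcmin : ∀ j, c j ≠ 0 → κ j₀ ≤ κ j := by
    intro j hj
    refine hmin j ?_
    simp only [Finset.mem_filter, Finset.mem_univ, true_and]
    rintro h0
    apply hj
    simp [hcd, h0]
  have key : ∃ (Θ' : ℂ → Matrix (Fin m) (Fin m) ℂ) (κ' : Fin m → ℤ),
      (∀ j, GoodCol α B (κ' j) (fun i z => Θ' z i j)) ∧ ∃ C : ℂ, C ≠ 0 ∧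
      ∀ z ∈ closedBall (0 : ℂ) 1, z ≠ a →
        (z - a) * (1 - starRingEnd ℂ a * z) * (Θ' z).det = C * (Θ z).det := by
    by_cases hreal : ∀ j, κ j = κ j₀ → starRingEnd ℂ (c j) = c j
    · obtain ⟨Θ', κ', h1, h2⟩ := step_real hα0 hα1 hΘ ha hc hc1 hcmin hreal
      exact ⟨Θ', κ', h1, 1, one_ne_zero, fun z hz _ => by rw [h2 z hz, one_mul]⟩
    · push Not at hreal
      obtain ⟨j₁, hκ, him⟩ := hreal
      exact step_complex hα0 hα1 hΘ ha hc hc1 hcmin hκ him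
  obtain ⟨Θ', κ', hΘ', C, hC, hdet'⟩ := key
  have hne := fun z hz => one_sub_conj_mul_ne_zero (z := z) ha hz
  have hv : ContinuousOn (fun z => C * u z * (1 - starRingEnd ℂ a * z)⁻¹) (closedBall 0 1) :=
    (continuousOn_const.mul huc).mul (ContinuousOn.inv₀ (by fun_prop) hne)
  have hEq : ∀ z ∈ closedBall (0 : ℂ) 1, z ≠ a → (Θ' z).det =
      (L.map fun a => z - a).prod * (C * u z * (1 - starRingEnd ℂ a * z)⁻¹) := by
    intro z hz hza
    have h1 := hdet' z hz hza
    rw [hu z hz, Multiset.map_cons, Multiset.prod_cons] at h1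
    have h2 := hne z hz
    refine mul_left_cancel₀ (mul_ne_zero (sub_ne_zero.2 hza) h2) (h1.trans ?_)
    have h3 : (1 - starRingEnd ℂ a * z) * (1 - starRingEnd ℂ a * z)⁻¹ = 1 := mul_inv_cancel₀ h2
    linear_combination (-(C * (z - a) * (L.map fun a => z - a).prod * u z)) * h3
  refine ⟨Θ', κ', hΘ', _, hv, fun z hz => mul_ne_zero (mul_ne_zero hC (hu0 z hz))
    (inv_ne_zero (hne z hz)), fun z hz => ?_⟩
  rcases eq_or_ne z a with rfl | hza
  -- The identity extends to the excluded point by continuity.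
  · have hnb : closedBall (0 : ℂ) 1 ∈ 𝓝 z := mem_of_superset (isOpen_ball.mem_nhds hab)
      ball_subset_closedBall
    have c1 : ContinuousAt (fun z => (Θ' z).det) z :=
      (continuousOn_det fun i j => ((hΘ' j).disc i).cont).continuousAt hnb
    have c2 : ContinuousAt (fun w => (L.map fun a => w - a).prod *
        (C * u w * (1 - starRingEnd ℂ z * w)⁻¹)) z :=
      (Continuous.continuousAt (continuous_multiset_prod _ fun a _ => by fun_prop)).mul
        (hv.continuousAt hnb)
    refine tendsto_nhds_unique_of_eventuallyEq (c1.tendsto.mono_left nhdsWithin_le_nhds)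
      (c2.tendsto.mono_left nhdsWithin_le_nhds) (l := 𝓝[≠] z) ?_
    filter_upwards [self_mem_nhdsWithin, mem_nhdsWithin_of_mem_nhds hnb] with w hw hw'
    exact hEq w hw' hw
  · exact hEq z hz hza

lemma PartialFact.reduce {α : ℝ} (hα0 : 0 < α) (hα1 : α < 1) {m : ℕ}
    {B : ℂ → Matrix (Fin m) (Fin m) ℂ} {L : Multiset ℂ} (hL : ∀ a ∈ L, ‖a‖ < 1) :
    ∀ {Θ : ℂ → Matrix (Fin m) (Fin m) ℂ} {κ : Fin m → ℤ}, PartialFact α B Θ κ L →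
      ∃ Θ' κ', PartialFact α B Θ' κ' 0 := by
  induction L using Multiset.induction_on with
  | empty => exact fun h => ⟨_, _, h⟩
  | cons a L ih =>
    intro Θ κ h
    obtain ⟨Θ', κ', h'⟩ := h.step hα0 hα1 (hL a (Multiset.mem_cons_self _ _))
    exact ih (fun b hb => hL b (Multiset.mem_cons_of_mem hb)) h'

lemma PartialFact.reindex {α : ℝ} {m : ℕ} {B Θ : ℂ → Matrix (Fin m) (Fin m) ℂ} {κ : Fin m → ℤ}
    (h : PartialFact α B Θ κ 0) (σ : Equiv.Perm (Fin m)) :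
    PartialFact α B (fun z => (Θ z).submatrix id σ) (κ ∘ σ) 0 := by
  obtain ⟨hΘ, u, huc, hu0, hu⟩ := h
  refine ⟨fun j => hΘ (σ j), fun z => (Equiv.Perm.sign σ : ℂ) * u z, continuousOn_const.mul huc,
    fun z hz => mul_ne_zero (by exact_mod_cast (Equiv.Perm.sign σ).ne_zero) (hu0 z hz),
    fun z hz => ?_⟩
  rw [Matrix.det_permute', hu z hz]
  simp

lemma exists_antitone_perm {m : ℕ} (κ : Fin m → ℤ) : ∃ σ : Equiv.Perm (Fin m), Antitone (κ ∘ σ) := by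
  refine ⟨Tuple.sort (fun i => -κ i), fun i j hij => ?_⟩
  have := Tuple.monotone_sort (fun i => -κ i) hij
  simp only [Function.comp_apply] at this ⊢
  linarith

end


attribute [local instance] Matrix.normedAddCommGroup

/-- **Birkhoff factorization** (Globevnik): a Hölder-continuous map `A` from the unit
circle to `GL(m, ℂ)` admits a factorization
`A(ζ) · conj(A(ζ))⁻¹ = Θ(ζ) · diag(ζ^κ₁, …, ζ^κ_m) · conj(Θ(ζ))⁻¹`
with `Θ` continuous on the closed disc, holomorphic and invertible on it, Hölder on the
boundary, and a nonincreasing sequence of integers `κ₁ ≥ … ≥ κ_m`. -/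
theorem birkhoff_factorization (α : ℝ) (hα0 : 0 < α) (hα1 : α < 1) (m : ℕ) (hm : 0 < m)
    (A : ℂ → Matrix (Fin m) (Fin m) ℂ)
    (hAunit : ∀ ζ ∈ Metric.sphere (0 : ℂ) 1, IsUnit (A ζ))
    (hAHolder : ∃ C : ℝ, 0 ≤ C ∧ ∀ ζ₁ ∈ Metric.sphere (0 : ℂ) 1,
      ∀ ζ₂ ∈ Metric.sphere (0 : ℂ) 1, ‖A ζ₁ - A ζ₂‖ ≤ C * ‖ζ₁ - ζ₂‖ ^ α) :
    ∃ (Θ : ℂ → Matrix (Fin m) (Fin m) ℂ) (κ : Fin m → ℤ),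
      Antitone κ ∧
      ContinuousOn Θ (Metric.closedBall (0 : ℂ) 1) ∧
      (∀ i j, DifferentiableOn ℂ (fun z => Θ z i j) (Metric.ball (0 : ℂ) 1)) ∧
      (∀ z ∈ Metric.closedBall (0 : ℂ) 1, IsUnit (Θ z)) ∧
      (∃ C : ℝ, 0 ≤ C ∧ ∀ ζ₁ ∈ Metric.sphere (0 : ℂ) 1,
        ∀ ζ₂ ∈ Metric.sphere (0 : ℂ) 1, ‖Θ ζ₁ - Θ ζ₂‖ ≤ C * ‖ζ₁ - ζ₂‖ ^ α) ∧
      ∀ ζ ∈ Metric.sphere (0 : ℂ) 1,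
        A ζ * ((A ζ).map (starRingEnd ℂ))⁻¹ =
          Θ ζ * Matrix.diagonal (fun i => ζ ^ κ i) * ((Θ ζ).map (starRingEnd ℂ))⁻¹ := by
  have hdet : ∀ ζ ∈ Metric.sphere (0 : ℂ) 1, (A ζ).det ≠ 0 := fun ζ hζ =>
    isUnit_iff_ne_zero.1 ((Matrix.isUnit_iff_isUnit_det _).1 (hAunit ζ hζ))
  obtain ⟨K, -, hK⟩ := hAHolder
  have hA : ∀ i j, IsHolder α (fun z => A z i j) := fun i j =>
    ⟨K, fun ζ₁ h₁ ζ₂ h₂ =>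
      (Matrix.norm_entry_le_entrywise_sup_norm (A ζ₁ - A ζ₂) (i := i) (j := j)).trans
        (hK ζ₁ h₁ ζ₂ h₂)⟩
  obtain ⟨Θ₀, k, L, u, hdisc, hrel, hL, huc, hu0, hu⟩ := exists_initial hα0 hα1 A hdet hA
  have hP : PartialFact α (fun ζ => A ζ * ((A ζ).map (starRingEnd ℂ))⁻¹) Θ₀ (fun _ => k) L := by
    refine ⟨fun j => ⟨fun i => hdisc i j, fun ζ hζ i => ?_⟩, u, huc, hu0, hu⟩
    exact congrFun (congrFun (hrel ζ hζ) i) j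
  obtain ⟨Θ₁, κ₁, h₁⟩ := hP.reduce hα0 hα1 hL
  obtain ⟨σ, hσ⟩ := exists_antitone_perm κ₁
  obtain ⟨hcol, v, -, hv0, hv⟩ := h₁.reindex σ
  set Θ : ℂ → Matrix (Fin m) (Fin m) ℂ := fun z => (Θ₁ z).submatrix id σ with hΘ
  have hΘdet : ∀ z ∈ Metric.closedBall (0 : ℂ) 1, (Θ z).det ≠ 0 := by
    intro z hz
    rw [hv z hz]
    simpa using hv0 z hz
  refine ⟨Θ, κ₁ ∘ σ, hσ, ?_, fun i j => ((hcol j).disc i).diff, fun z hz => ?_, ?_,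
    fun ζ hζ => ?_⟩
  · exact continuousOn_pi.2 fun i => continuousOn_pi.2 fun j => ((hcol j).disc i).cont
  · exact (Matrix.isUnit_iff_isUnit_det _).2 (isUnit_iff_ne_zero.2 (hΘdet z hz))
  · obtain ⟨H, hH0, hH, -⟩ := IsHolder.uniform hα0 (X := Θ) fun i j => ((hcol j).disc i).hold
    refine ⟨H, hH0, fun ζ₁ h₁ ζ₂ h₂ => ?_⟩
    rw [Matrix.norm_le_iff (by positivity)]
    exact fun i j => hH i j ζ₁ h₁ ζ₂ h₂
  · have hcΘ : (Θ ζ).map (starRingEnd ℂ) * ((Θ ζ).map (starRingEnd ℂ))⁻¹ = 1 := by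
      refine Matrix.mul_nonsing_inv _ (isUnit_iff_ne_zero.2 ?_)
      have := RingHom.map_det (starRingEnd ℂ) (Θ ζ)
      rw [RingHom.mapMatrix_apply] at this
      rw [← this]
      exact (map_ne_zero _).2 (hΘdet ζ (Metric.sphere_subset_closedBall hζ))
    have hmain : A ζ * ((A ζ).map (starRingEnd ℂ))⁻¹ * (Θ ζ).map (starRingEnd ℂ) =
        Θ ζ * Matrix.diagonal (fun i => ζ ^ (κ₁ ∘ σ) i) := by
      ext i j
      rw [Matrix.mul_diagonal, mul_comm]
      exact (hcol j).rel ζ hζ i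
    rw [← hmain, mul_assoc _ ((Θ ζ).map (starRingEnd ℂ)), hcΘ, mul_one]
end

section
/- Let m be a positive integer and let κ₁ ≥ … ≥ κ_m and κ'₁ ≥ … ≥ κ'_m be two nonincreasing sequences of integers. Suppose Θ₁ and Θ₂ are continuous maps from the closed unit disc 𝔻̄ to the m×m complex matrices, holomorphic on the open disc 𝔻 and taking invertible values at every point of 𝔻̄, such that for every ζ ∈ ∂𝔻 one has Θ₁(ζ)·diag(ζ^{κ₁}, …, ζ^{κ_m})·conj(Θ₁(ζ))⁻¹ = Θ₂(ζ)·diag(ζ^{κ'₁}, …, ζ^{κ'_m})·conj(Θ₂(ζ))⁻¹. Then κ_i = κ'_i for every i; that is, the partial indices of a Birkhoff factorization are unique. -/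
/-!
Put `A = Θ₂⁻¹ Θ₁`, which is holomorphic on the open disc, continuous on the closed disc and
invertible. The boundary identity becomes `A · diag(ζ ^ κ) = diag(ζ ^ κ') · conj A`, that is
`a i j * ζ ^ κ j = ζ ^ κ' i * conj (a i j)` on the unit circle.

If `κ' i < κ j`, then with `n = κ j - κ' i > 0` the holomorphic function `g = z ^ n * (a i j) ^ 2`
equals `‖a i j‖ ^ 2 ≥ 0` on the circle and vanishes at `0`. So `exp (-g)` has modulus at most `1`
on the circle and attains modulus `1` at the centre; by the maximum principle its modulus is `1`
everywhere, so `a i j = 0` on the circle (`eq_zero_of_mul_pow_eq_conj`).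

If `κ' k < κ k` for some `k`, monotonicity gives `a i j = 0` on the circle whenever `j ≤ k ≤ i`.
Such a block of zeros is too large for an invertible matrix (`det_eq_zero_of_zero_block`), so
`κ k ≤ κ' k`; the opposite inequality follows by exchanging the two factorizations.
-/

open Metric in
/-- A disc-algebra function `a` with `ζ ^ n * a ζ = conj (a ζ)` on the unit circle for some `n > 0`
vanishes on the circle. -/
lemma eq_zero_of_mul_pow_eq_conj {a : ℂ → ℂ} {n : ℕ} (hn : n ≠ 0)
    (hd : DifferentiableOn ℂ a (ball 0 1)) (hc : ContinuousOn a (closedBall 0 1))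
    (h : ∀ ζ ∈ sphere (0 : ℂ) 1, ζ ^ n * a ζ = starRingEnd ℂ (a ζ)) :
    ∀ ζ ∈ sphere (0 : ℂ) 1, a ζ = 0 := by
  set F : ℂ → ℂ := fun z => Complex.exp (-(z ^ n * a z * a z)) with hF
  have hFd : DiffContOnCl ℂ F (ball 0 1) := by
    refine ⟨by fun_prop, ?_⟩
    rw [closure_ball _ one_ne_zero]
    fun_prop
  have hnorm : ∀ ζ ∈ sphere (0 : ℂ) 1, ‖F ζ‖ = Real.exp (-Complex.normSq (a ζ)) := by
    intro ζ hζ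
    simp only [hF, h ζ hζ, Complex.norm_exp, ← Complex.normSq_eq_conj_mul_self]
    simp
  have hF0 : ‖F 0‖ = 1 := by simp [hF, hn]
  have hmax : IsMaxOn (norm ∘ F) (ball 0 1) 0 := by
    intro z hz
    simp only [Set.mem_ofPred_eq, Function.comp_apply, hF0]
    refine Complex.norm_le_of_forall_mem_frontier_norm_le isBounded_ball hFd ?_ (subset_closure hz)
    intro ζ hζ
    rw [frontier_ball _ one_ne_zero] at hζ
    rw [hnorm ζ hζ, Real.exp_le_one_iff]
    simpa using Complex.normSq_nonneg (a ζ)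
  have hconst := Complex.norm_eqOn_closure_of_isPreconnected_of_isMaxOn
    (convex_ball (0 : ℂ) 1).isPreconnected isOpen_ball hFd (mem_ball_self one_pos) hmax
  intro ζ hζ
  have h1 : ‖F ζ‖ = ‖F 0‖ := hconst (by
    rw [closure_ball _ one_ne_zero]; exact sphere_subset_closedBall hζ)
  rw [hnorm ζ hζ, hF0, Real.exp_eq_one_iff, neg_eq_zero] at h1
  exact Complex.normSq_eq_zero.mp h1

/-- A square matrix vanishing on the rows `≥ k` and columns `≤ k` is singular: a permutation
cannot map `{j | j ≤ k}` into the smaller set `{i | i < k}`, so every Leibniz term is zero. -/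
lemma det_eq_zero_of_zero_block {m : ℕ} (M : Matrix (Fin m) (Fin m) ℂ) (k : Fin m)
    (h : ∀ i j, j ≤ k → k ≤ i → M i j = 0) : M.det = 0 := by
  rw [Matrix.det_apply]
  refine Finset.sum_eq_zero fun σ _ => ?_
  obtain ⟨j, hj, hσ⟩ : ∃ j ≤ k, k ≤ σ j := by
    by_contra! hcon
    have := Finset.card_le_card_of_injOn (s := Finset.Iic k) (t := Finset.Iio k) σ
      (fun j hj => by simpa using hcon j (by simpa using hj)) σ.injective.injOn
    simp at this
  rw [Finset.prod_eq_zero (f := fun i => M (σ i) i) (Finset.mem_univ j) (h _ _ hj hσ), smul_zero]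

lemma differentiableOn_det {m : ℕ} {M : ℂ → Matrix (Fin m) (Fin m) ℂ} {s : Set ℂ}
    (h : ∀ i j, DifferentiableOn ℂ (fun z => M z i j) s) :
    DifferentiableOn ℂ (fun z => (M z).det) s := by
  simp only [Matrix.det_apply]
  fun_prop

lemma differentiableOn_adjugate {m : ℕ} {M : ℂ → Matrix (Fin m) (Fin m) ℂ} {s : Set ℂ}
    (h : ∀ i j, DifferentiableOn ℂ (fun z => M z i j) s) (i j : Fin m) :
    DifferentiableOn ℂ (fun z => (M z).adjugate i j) s := by
  simp only [Matrix.adjugate_apply]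
  refine differentiableOn_det fun p q => ?_
  by_cases hp : p = j
  · subst hp
    simp
  · simpa [Matrix.updateRow_ne hp] using h p q

open Metric in
/-- One half of the uniqueness of the partial indices. -/
lemma birkhoff_partial_indices_le (m : ℕ)
    (κ κ' : Fin m → ℤ) (hκ : Antitone κ) (hκ' : Antitone κ')
    (Θ₁ Θ₂ : ℂ → Matrix (Fin m) (Fin m) ℂ)
    (hΘ₁cont : ContinuousOn Θ₁ (closedBall (0 : ℂ) 1))
    (hΘ₂cont : ContinuousOn Θ₂ (closedBall (0 : ℂ) 1))
    (hΘ₁hol : ∀ i j, DifferentiableOn ℂ (fun z => Θ₁ z i j) (ball (0 : ℂ) 1))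
    (hΘ₂hol : ∀ i j, DifferentiableOn ℂ (fun z => Θ₂ z i j) (ball (0 : ℂ) 1))
    (hΘ₁unit : ∀ z ∈ closedBall (0 : ℂ) 1, IsUnit (Θ₁ z))
    (hΘ₂unit : ∀ z ∈ closedBall (0 : ℂ) 1, IsUnit (Θ₂ z))
    (heq : ∀ ζ ∈ sphere (0 : ℂ) 1,
      Θ₁ ζ * Matrix.diagonal (fun i => ζ ^ κ i) * ((Θ₁ ζ).map (starRingEnd ℂ))⁻¹ =
        Θ₂ ζ * Matrix.diagonal (fun i => ζ ^ κ' i) * ((Θ₂ ζ).map (starRingEnd ℂ))⁻¹)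
    (k : Fin m) : κ k ≤ κ' k := by
  by_contra! hk
  set A : ℂ → Matrix (Fin m) (Fin m) ℂ := fun z => (Θ₂ z)⁻¹ * Θ₁ z with hA
  have hdet : ∀ z ∈ closedBall (0 : ℂ) 1, (Θ₂ z).det ≠ 0 := fun z hz =>
    ((Matrix.isUnit_iff_isUnit_det _).mp (hΘ₂unit z hz)).ne_zero
  have hAentry : ∀ i j z, A z i j = ((Θ₂ z).det)⁻¹ * ∑ l, (Θ₂ z).adjugate i l * Θ₁ z l j := by
    intro i j z
    simp [hA, Matrix.inv_def, Matrix.mul_apply]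
  have hAd : ∀ i j, DifferentiableOn ℂ (fun z => A z i j) (ball 0 1) := by
    intro i j
    simp only [hAentry]
    refine ((differentiableOn_det hΘ₂hol).inv fun z hz => hdet z (ball_subset_closedBall hz)).mul ?_
    exact DifferentiableOn.fun_sum fun l _ =>
      (differentiableOn_adjugate hΘ₂hol i l).mul (hΘ₁hol l j)
  have hAc : ∀ i j, ContinuousOn (fun z => A z i j) (closedBall 0 1) := by
    intro i j
    simp only [hAentry]
    have hcd : ContinuousOn (fun z => (Θ₂ z).det) (closedBall 0 1) :=
      (continuous_id.matrix_det).comp_continuousOn hΘ₂cont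
    have hca : ContinuousOn (fun z => (Θ₂ z).adjugate) (closedBall 0 1) :=
      (continuous_id.matrix_adjugate).comp_continuousOn hΘ₂cont
    refine (hcd.inv₀ hdet).mul (continuousOn_finsetSum _ fun l _ => ?_)
    exact ((continuous_id.matrix_elem i l).comp_continuousOn hca).mul
      ((continuous_id.matrix_elem l j).comp_continuousOn hΘ₁cont)
  have hAeq : ∀ ζ ∈ sphere (0 : ℂ) 1, ∀ i j,
      A ζ i j * ζ ^ κ j = ζ ^ κ' i * starRingEnd ℂ (A ζ i j) := by
    intro ζ hζ i j
    have hζ' := sphere_subset_closedBall hζ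
    have hu₁ := hΘ₁unit ζ hζ'
    have hu₂ := hΘ₂unit ζ hζ'
    have hc₁ : IsUnit ((Θ₁ ζ).map (starRingEnd ℂ)) := hu₁.map (starRingEnd ℂ).mapMatrix
    have hc₂ : IsUnit ((Θ₂ ζ).map (starRingEnd ℂ)) := hu₂.map (starRingEnd ℂ).mapMatrix
    rw [Matrix.isUnit_iff_isUnit_det] at hu₁ hu₂ hc₁ hc₂
    have hinv : ((Θ₂ ζ).map (starRingEnd ℂ))⁻¹ = ((Θ₂ ζ)⁻¹).map (starRingEnd ℂ) := by
      refine Matrix.inv_eq_left_inv ?_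
      rw [← Matrix.map_mul, Matrix.nonsing_inv_mul _ hu₂]
      simp
    have key : A ζ * Matrix.diagonal (fun i => ζ ^ κ i) =
        Matrix.diagonal (fun i => ζ ^ κ' i) * (A ζ).map (starRingEnd ℂ) := by
      have h1 := congrArg (fun M => (Θ₂ ζ)⁻¹ * M * (Θ₁ ζ).map (starRingEnd ℂ)) (heq ζ hζ)
      simp only [hinv] at h1
      simp only [Matrix.mul_assoc, Matrix.nonsing_inv_mul _ hc₁, Matrix.mul_one,
        Matrix.nonsing_inv_mul_cancel_left _ _ hu₂] at h1
      simp only [hA, Matrix.map_mul, Matrix.mul_assoc]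
      exact h1
    simpa [Matrix.mul_diagonal, Matrix.diagonal_mul] using congrFun (congrFun key i) j
  have hone : (1 : ℂ) ∈ sphere (0 : ℂ) 1 := by simp
  have hdetA : (A 1).det = 0 := by
    refine det_eq_zero_of_zero_block _ k fun i j hj hi => ?_
    have hlt : κ' i < κ j := (hκ' hi).trans_lt (hk.trans_le (hκ hj))
    obtain ⟨n, hn⟩ := Int.eq_ofNat_of_zero_le (sub_nonneg.mpr hlt.le)
    refine eq_zero_of_mul_pow_eq_conj (n := n) (by omega) (hAd i j) (hAc i j) ?_ 1 hone
    intro ζ hζ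
    have hζ0 : ζ ≠ 0 := ne_of_mem_sphere hζ one_ne_zero
    have h1 := hAeq ζ hζ i j
    rw [show κ j = κ' i + n by omega, zpow_add₀ hζ0, zpow_natCast] at h1
    exact mul_left_cancel₀ (zpow_ne_zero (κ' i) hζ0) (by linear_combination h1)
  have hunit : IsUnit (A 1).det := by
    have h1 := hΘ₁unit 1 (sphere_subset_closedBall hone)
    have h2 := hΘ₂unit 1 (sphere_subset_closedBall hone)
    rw [← Matrix.isUnit_iff_isUnit_det]
    exact (Matrix.isUnit_nonsing_inv_iff.mpr h2).mul h1
  exact hunit.ne_zero hdetA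

/-- **Uniqueness of the partial indices in a Birkhoff factorization**: if two
nonincreasing integer sequences `κ`, `κ'` arise as partial indices of Birkhoff
factorizations of the same boundary data, then they are equal. -/
theorem birkhoff_partial_indices_unique (m : ℕ) (hm : 0 < m)
    (κ κ' : Fin m → ℤ) (hκ : Antitone κ) (hκ' : Antitone κ')
    (Θ₁ Θ₂ : ℂ → Matrix (Fin m) (Fin m) ℂ)
    (hΘ₁cont : ContinuousOn Θ₁ (Metric.closedBall (0 : ℂ) 1))
    (hΘ₂cont : ContinuousOn Θ₂ (Metric.closedBall (0 : ℂ) 1))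
    (hΘ₁hol : ∀ i j, DifferentiableOn ℂ (fun z => Θ₁ z i j) (Metric.ball (0 : ℂ) 1))
    (hΘ₂hol : ∀ i j, DifferentiableOn ℂ (fun z => Θ₂ z i j) (Metric.ball (0 : ℂ) 1))
    (hΘ₁unit : ∀ z ∈ Metric.closedBall (0 : ℂ) 1, IsUnit (Θ₁ z))
    (hΘ₂unit : ∀ z ∈ Metric.closedBall (0 : ℂ) 1, IsUnit (Θ₂ z))
    (heq : ∀ ζ ∈ Metric.sphere (0 : ℂ) 1,
      Θ₁ ζ * Matrix.diagonal (fun i => ζ ^ κ i) * ((Θ₁ ζ).map (starRingEnd ℂ))⁻¹ =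
        Θ₂ ζ * Matrix.diagonal (fun i => ζ ^ κ' i) * ((Θ₂ ζ).map (starRingEnd ℂ))⁻¹) :
    ∀ i, κ i = κ' i := by
  exact fun k => le_antisymm
    (birkhoff_partial_indices_le m κ κ' hκ hκ' Θ₁ Θ₂ hΘ₁cont hΘ₂cont hΘ₁hol hΘ₂hol
      hΘ₁unit hΘ₂unit heq k)
    (birkhoff_partial_indices_le m κ' κ hκ' hκ Θ₂ Θ₁ hΘ₂cont hΘ₁cont hΘ₂hol hΘ₁hol
      hΘ₂unit hΘ₁unit (fun ζ hζ => (heq ζ hζ).symm) k)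
end
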